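/- Let w = x^{a_1}y^{b_1}···x^{a_r}y^{b_r} be a reduced word of prime complexity r and let p be a prime with p > r. If the family of word maps P_{w,q}: SL(2,q) × SL(2,q) → SL(2,q), q = p^n, is not p-equidistributed, then there exist nonzero integers α, β such that w = (x^α y^β)^r. -/

import Mathlib

open Matrix Polynomial

abbrev SL2 (K : Type) [CommRing K] : Type := Matrix.SpecialLinearGroup (Fin 2) K

abbrev PSL2 (K : Type) [CommRing K] : Type := SL2 K ⧸ Subgroup.center (SL2 K)

/-- Evaluation of a word `w ∈ F₂` at a pair of group elements. -/
def wordEval {G : Type*} [Group G] (w : FreeGroup (Fin 2)) (g₁ g₂ : G) : G :=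
  (FreeGroup.lift ![g₁, g₂]) w

/-- The word map `P_{w,G} : G × G → G` for `G = SL(2,K)`. -/
def wordMap (w : FreeGroup (Fin 2)) (K : Type) [CommRing K] :
    SL2 K × SL2 K → SL2 K := fun g => wordEval w g.1 g.2

/-- The point `(tr x, tr xy, tr y)`. -/
def trPoint {K : Type} [CommRing K] (x y : SL2 K) : Fin 3 → K :=
  ![Matrix.trace (x : Matrix (Fin 2) (Fin 2) K),
    Matrix.trace ((x * y : SL2 K) : Matrix (Fin 2) (Fin 2) K),
    Matrix.trace (y : Matrix (Fin 2) (Fin 2) K)]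

/-- `f ∈ ℤ[s,u,t]` is the trace polynomial of the word `w`. -/
def IsTracePolynomial (w : FreeGroup (Fin 2)) (f : MvPolynomial (Fin 3) ℤ) : Prop :=
  ∀ (K : Type) [CommRing K], ∀ x y : SL2 K,
    Matrix.trace ((wordEval w x y : SL2 K) : Matrix (Fin 2) (Fin 2) K) =
      MvPolynomial.eval (trPoint x y) (MvPolynomial.map (Int.castRingHom K) f)

/-- `f : X → Y` is `ε`-equidistributed. -/
def IsEquidistributed {X Y : Type*} (f : X → Y) (ε : ℝ) : Prop :=
  ∃ Y' : Set Y,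
    (1 - ε) * (Nat.card Y) < (Nat.card Y' : ℝ) ∧
    ∀ y ∈ Y',
      |(Nat.card {x : X // f x = y} : ℝ) - (Nat.card X : ℝ) / (Nat.card Y)| <
        ε * (Nat.card X) / (Nat.card Y)

/-- The family of word maps on `SL(2,p^n)` is `p`-equidistributed. -/
def IsPEquidistributed (w : FreeGroup (Fin 2)) (p : ℕ) (hp : p.Prime) : Prop :=
  letI : Fact p.Prime := ⟨hp⟩
  ∃ ε : ℕ → ℝ,
    Filter.Tendsto (fun n : ℕ => ε (p ^ n)) Filter.atTop (nhds 0) ∧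
    ∀ᶠ n : ℕ in Filter.atTop,
      IsEquidistributed (wordMap w (GaloisField p n)) (ε (p ^ n))

/-- The family of word maps on `SL(2,q)`, `q` ranging over all prime powers,
is equidistributed. -/
def IsEquidistributedFamily (w : FreeGroup (Fin 2)) : Prop :=
  ∃ ε : ℕ → ℝ,
    Filter.Tendsto ε Filter.atTop (nhds 0) ∧
    ∀ (p : ℕ) (hp : p.Prime),
      letI : Fact p.Prime := ⟨hp⟩
      ∀ᶠ n : ℕ in Filter.atTop,
        IsEquidistributed (wordMap w (GaloisField p n)) (ε (p ^ n))

/-- Reduction of an integral polynomial mod `p`. -/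
noncomputable def reduceMod (p : ℕ) (P : MvPolynomial (Fin 3) ℤ) : MvPolynomial (Fin 3) (ZMod p) :=
  MvPolynomial.map (Int.castRingHom (ZMod p)) P

/-- `P = h ∘ Q` with `deg Q ≥ 1`, `deg h ≥ 2`. -/
def IsCompositePoly (F : Type) [CommRing F] (P : MvPolynomial (Fin 3) F) : Prop :=
  ∃ (Q : MvPolynomial (Fin 3) F) (h : Polynomial F),
    1 ≤ Q.totalDegree ∧ 2 ≤ h.natDegree ∧ P = Polynomial.aeval Q h

def IsPComposite (p : ℕ) (P : MvPolynomial (Fin 3) ℤ) : Prop :=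
  IsCompositePoly (ZMod p) (reduceMod p P)

/-- `h` is a permutation polynomial of every finite extension of `F_p`. -/
def IsPermAllExt (p : ℕ) (h : Polynomial (ZMod p)) : Prop :=
  ∀ (K : Type) [Field K] [Algebra (ZMod p) K] [Finite K],
    Function.Bijective fun z : K => Polynomial.aeval z h

def IsPSpecial (p : ℕ) (P : MvPolynomial (Fin 3) ℤ) : Prop :=
  IsPComposite p P ∧
    ∃ (Q : MvPolynomial (Fin 3) (ZMod p)) (h : Polynomial (ZMod p)),
      1 ≤ Q.totalDegree ∧ 2 ≤ h.natDegree ∧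
      reduceMod p P = Polynomial.aeval Q h ∧ IsPermAllExt p h

def AlmostNoncomposite (P : MvPolynomial (Fin 3) ℤ) : Prop :=
  ∀ p : ℕ, p.Prime → ¬ IsPComposite p P ∨ IsPSpecial p P

/-- The reduced word `x^{a₁}y^{b₁} ⋯ x^{a_r}y^{b_r}`. -/
def wordOf {r : ℕ} (a b : Fin r → ℤ) : FreeGroup (Fin 2) :=
  (List.ofFn fun i : Fin r =>
    FreeGroup.of (0 : Fin 2) ^ a i * FreeGroup.of (1 : Fin 2) ^ b i).prod

/-!
Substituting `(Φ τ A, Φ τ B)` for a suitable family of permutations `Φ τ` of `SL₂ × SL₂` makes the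
trace of `w` a polynomial in `τ`, whose degree depends on the family. Unless all `aᵢ` agree and all
`bᵢ` agree, counting modulo `r` yields a family whose degree `d` is not divisible by `r`. The degree
`e` of another family is congruent to `r` modulo `d`, hence coprime to `d` since `r` is prime.

A curve `F(x) = G(y)` with `deg F` and `deg G` coprime has a single place at infinity, and the
Stepanov argument in the form of Bombieri shows that it has at most about `q = pⁿ` points over
`𝔽_q`: a relation `∑ hᵢ ^ p^μ * bᵢ = 0` between functions of small pole order yields the nonzero
function `∑ hᵢ * bᵢ ^ p^(n - μ)`, which vanishes at every rational point. Averaging over all pairs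
of substitutions bounds the second moment of the fibers of the trace of `w` almost optimally, so by
Chebyshev's inequality nearly all trace fibers have nearly the mean size. The fiber sizes of the
word map are constant on conjugacy classes, which away from the traces `±2` are the trace classes,
so the equidistribution passes from the trace to the word map itself.
-/

section PoleOrders

variable {K R Γ : Type*} [Field K] [CommRing R] [Algebra K R]
  [LinearOrderedCommGroupWithZero Γ]

theorem valuation_algebraMap_eq_one [Finite K] (v : Valuation R Γ) {c : K} (hc : c ≠ 0) :
    v (algebraMap K R c) = 1 := by
  have := Fintype.ofFinite K
  have hpow : v (algebraMap K R c) ^ (Fintype.card K - 1) = 1 := by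
    rw [← map_pow, ← map_pow, FiniteField.pow_card_sub_one_eq_one c hc, map_one, map_one]
  exact (pow_eq_one_iff_of_nonneg zero_le (Nat.sub_ne_zero_of_lt Fintype.one_lt_card)).1 hpow

theorem valuation_smul [Finite K] (v : Valuation R Γ) {c : K} (hc : c ≠ 0) (f : R) :
    v (c • f) = v f := by
  rw [Algebra.smul_def, map_mul, valuation_algebraMap_eq_one v hc, one_mul]

theorem exists_valuation_sum_pow_eq {ι : Type*} (v : Valuation R Γ) {T : Γ} (hT : 1 < T) {e : ℕ}
    {s : Finset ι} (hs : s.Nonempty) {f : ι → R} {ω : ι → ℕ} (hω : Set.InjOn ω s)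
    (hf : ∀ i ∈ s, v (f i) ^ e = T ^ ω i) :
    ∃ j ∈ s, (∀ i ∈ s, ω i ≤ ω j) ∧ v (∑ i ∈ s, f i) ^ e = T ^ ω j := by
  classical
  obtain ⟨j, hj, hmax⟩ := s.exists_max_image ω hs
  refine ⟨j, hj, hmax, ?_⟩
  rw [Valuation.map_sum_eq_of_lt v hj, hf j hj]
  intro i hi
  obtain ⟨his, hij⟩ : i ∈ s ∧ i ≠ j := by simpa using hi
  refine lt_of_pow_lt_pow_left₀ e zero_le ?_
  rw [hf i his, hf j hj]
  exact pow_lt_pow_right₀ hT ((hmax i his).lt_of_ne fun h => hij (hω his hj h))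

theorem exists_valuation_sum_smul_pow_eq [Finite K] {ι : Type*} (v : Valuation R Γ) {T : Γ}
    (hT : 1 < T) {e : ℕ} {s : Finset ι} (hs : s.Nonempty) {f : ι → R} {c : ι → K} {ω : ι → ℕ}
    (hω : Set.InjOn ω s) (hc : ∀ i ∈ s, c i ≠ 0) (hf : ∀ i ∈ s, v (f i) ^ e = T ^ ω i) :
    ∃ j ∈ s, (∀ i ∈ s, ω i ≤ ω j) ∧ v (∑ i ∈ s, c i • f i) ^ e = T ^ ω j :=
  exists_valuation_sum_pow_eq v hT hs hω fun i hi => by rw [valuation_smul v (hc i hi), hf i hi]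

theorem valuation_aeval_eq [Finite K] (v : Valuation R Γ) {x : R} (hx : 1 < v x) {F : K[X]}
    (hF : F ≠ 0) : v (aeval x F) = v x ^ F.natDegree := by
  obtain ⟨j, hj, hmax, hv⟩ := exists_valuation_sum_smul_pow_eq v hx (e := 1) (f := fun i => x ^ i)
    (nonempty_support_iff.2 hF) (Function.injective_id.injOn) (fun i hi => mem_support_iff.1 hi)
    (fun i _ => by simp)
  rw [aeval_eq_sum_range, ← pow_one (v _)]
  convert hv using 3
  · exact (Finset.sum_subset supp_subset_range_natDegree_succ fun i _ hi => by
      rw [notMem_support_iff.1 hi, zero_smul]).symm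
  · exact le_antisymm (hmax _ (natDegree_mem_support_of_nonzero hF)) (le_natDegree_of_mem_supp _ hj)

theorem valuation_aeval_le_one [Finite K] (v : Valuation R Γ) {x : R} (hx : v x ≤ 1) (F : K[X]) :
    v (aeval x F) ≤ 1 := by
  rw [aeval_eq_sum_range]
  refine v.map_sum_le fun i _ => ?_
  by_cases hc : F.coeff i = 0
  · simp [hc]
  · rw [valuation_smul v hc, map_pow]
    exact pow_le_one₀ zero_le hx

variable (K) in
/-- The `K`-span of `b 0, …, b M`. -/
def initialSpan (b : ℕ → R) (M : ℕ) : Submodule K R :=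
  Submodule.span K (Set.range fun n : Fin (M + 1) => b n)

theorem mem_initialSpan (b : ℕ → R) {n M : ℕ} (hn : n ≤ M) : b n ∈ initialSpan K b M :=
  Submodule.subset_span ⟨⟨n, by omega⟩, rfl⟩

theorem initialSpan_mono (b : ℕ → R) {M N : ℕ} (h : M ≤ N) :
    initialSpan K b M ≤ initialSpan K b N :=
  Submodule.span_le.2 <| Set.range_subset_iff.2 fun n => mem_initialSpan b (by omega)

instance (b : ℕ → R) (M : ℕ) : FiniteDimensional K (initialSpan K b M) :=
  FiniteDimensional.span_of_finite K (Set.finite_range _)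

theorem finrank_initialSpan_le (b : ℕ → R) (M : ℕ) :
    Module.finrank K (initialSpan K b M) ≤ M + 1 :=
  (finrank_range_le_card (R := K) fun n : Fin (M + 1) => b n).trans_eq (Fintype.card_fin _)

/-- The linear combinations of the `k + 1` consecutive elements `b c, …, b (c + k)`. -/
def window (b : ℕ → R) (c k : ℕ) : (Fin (k + 1) → K) →ₗ[K] R :=
  Fintype.linearCombination K fun i => b (c + i)

theorem window_apply (b : ℕ → R) (c k : ℕ) (κ : Fin (k + 1) → K) :
    window b c k κ = ∑ i, κ i • b (c + i) := rfl

variable (K) in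
/-- Reading `v f ^ e = T ^ n` as "`f` has a pole of order `n`" at the place `v`, the sequence `b`
has an element of each pole order `n ≥ c`, and `b 0, …, b M` span the functions with a pole of order
at most `M`. The exponent `e` is the ramification index of the place over the coordinate whose
valuation is `T`. -/
structure IsPoleBasis (v : Valuation R Γ) (T : Γ) (e c : ℕ) (b : ℕ → R) : Prop where
  one_lt : 1 < T
  exponent_ne_zero : e ≠ 0
  valuation_pow_eq : ∀ n, c ≤ n → v (b n) ^ e = T ^ n
  mem_initialSpan_of_le : ∀ f M, v f ^ e ≤ T ^ M → f ∈ initialSpan K b M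
  exists_valuation_pow_le : ∀ f, ∃ n, v f ^ e ≤ T ^ n

/-- A family of `K`-points of `R` in which each point carries a function that is `1` at this point
and `0` at all the others. -/
def IsSeparating {S : Type*} (ev : S → R →ₐ[K] K) : Prop :=
  ∀ P, ∃ g, ev P g = 1 ∧ ∀ P', P' ≠ P → ev P' g = 0

namespace IsPoleBasis

variable {v : Valuation R Γ} {T : Γ} {e c : ℕ} {b : ℕ → R}

theorem nontrivial (hb : IsPoleBasis K v T e c b) : Nontrivial R := by
  refine ⟨b c, 0, fun h => pow_ne_zero c (zero_lt_one.trans hb.one_lt).ne' ?_⟩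
  rw [← hb.valuation_pow_eq c le_rfl, h, map_zero, zero_pow hb.exponent_ne_zero]

theorem exists_valuation_window_pow_eq [Finite K] (hb : IsPoleBasis K v T e c b) {k : ℕ}
    {κ : Fin (k + 1) → K} (hκ : κ ≠ 0) : ∃ m ≤ k, v (window b c k κ) ^ e = T ^ (c + m) := by
  classical
  obtain ⟨i₀, hi₀⟩ := Function.ne_iff.1 hκ
  obtain ⟨j, -, -, hj⟩ := exists_valuation_sum_smul_pow_eq v hb.one_lt (c := κ)
    (s := Finset.univ.filter fun i => κ i ≠ 0) ⟨i₀, by simpa using hi₀⟩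
    (ω := fun i : Fin (k + 1) => c + (i : ℕ)) (fun i _ i' _ h => Fin.ext (by simpa using h))
    (fun i hi => (Finset.mem_filter.1 hi).2)
    (fun i _ => hb.valuation_pow_eq (c + i) (Nat.le_add_right _ _))
  refine ⟨j, Fin.is_le j, ?_⟩
  rw [← hj, window_apply, Finset.sum_filter_of_ne]
  rintro i - h hi
  exact h (by rw [hi, zero_smul])

theorem valuation_window_pow_le [Finite K] (hb : IsPoleBasis K v T e c b) {k : ℕ}
    (κ : Fin (k + 1) → K) : v (window b c k κ) ^ e ≤ T ^ (c + k) := by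
  obtain rfl | hκ := eq_or_ne κ 0
  · simp [zero_pow hb.exponent_ne_zero]
  · obtain ⟨m, hm, h⟩ := hb.exists_valuation_window_pow_eq hκ
    rw [h]
    exact pow_le_pow_right₀ hb.one_lt.le (by omega)

theorem window_eq_zero_of_mul_eq_zero [Finite K] (hb : IsPoleBasis K v T e c b) {f : R} {D : ℕ}
    (hf : v f ^ e = T ^ D) {k : ℕ} {κ : Fin (k + 1) → K} (h : f * window b c k κ = 0) : κ = 0 := by
  by_contra hκ
  obtain ⟨m, -, hm⟩ := hb.exists_valuation_window_pow_eq hκ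
  have hT := (zero_lt_one.trans hb.one_lt).ne'
  refine mul_ne_zero (pow_ne_zero D hT) (pow_ne_zero (c + m) hT) ?_
  rw [← hf, ← hm, ← mul_pow, ← map_mul, h, map_zero, zero_pow hb.exponent_ne_zero]

-- Multiples `f * h`, with `h` in a long window, together with functions separating the points,
-- are linearly independent and have bounded pole orders.
theorem card_zeros_le [Finite K] (hb : IsPoleBasis K v T e c b) {S : Type*} [Fintype S]
    {ev : S → R →ₐ[K] K} (hev : IsSeparating ev) {f : R} {D : ℕ} (hf : v f ^ e = T ^ D)
    (hf₀ : ∀ P, ev P f = 0) : Fintype.card S ≤ D + c := by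
  classical
  choose g hg₁ hg₀ using hev
  choose w hw using fun P => hb.exists_valuation_pow_le (g P)
  set k := ∑ P, w P
  set W := initialSpan K b (D + c + k)
  let Λ : ((Fin (k + 1) → K) × (S → K)) →ₗ[K] R :=
    LinearMap.coprod ((LinearMap.mulLeft K f).comp (window b c k)) (Fintype.linearCombination K g)
  have hΛ h κ : Λ (h, κ) = f * window b c k h + ∑ P, κ P • g P := rfl
  have hmem z : Λ z ∈ W := by
    refine W.add_mem (hb.mem_initialSpan_of_le _ _ ?_)
      (W.sum_mem fun P _ => W.smul_mem _ (hb.mem_initialSpan_of_le _ _ ((hw P).trans ?_)))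
    · calc v (f * window b c k z.1) ^ e = T ^ D * v (window b c k z.1) ^ e := by
            rw [map_mul, mul_pow, hf]
        _ ≤ T ^ D * T ^ (c + k) := mul_le_mul_right (hb.valuation_window_pow_le _) _
        _ = T ^ (D + c + k) := by rw [← pow_add, add_assoc]
    · exact pow_le_pow_right₀ hb.one_lt.le
        ((Finset.single_le_sum (fun _ _ => Nat.zero_le _) (Finset.mem_univ P)).trans
          (Nat.le_add_left _ _))
  have hinj : Function.Injective Λ := by
    rw [injective_iff_map_eq_zero]
    rintro ⟨h, κ⟩ h₀
    rw [hΛ] at h₀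
    have hκ : κ = 0 := by
      funext P
      have hP := congrArg (ev P) h₀
      rw [map_add, map_mul, hf₀, zero_mul, zero_add, map_sum, map_zero,
        Finset.sum_eq_single P (fun Q _ hQ => by simp [hg₀ Q P hQ.symm]) (by simp)] at hP
      simpa [hg₁] using hP
    have hh : h = 0 := hb.window_eq_zero_of_mul_eq_zero hf (by simpa [hκ] using h₀)
    simp [hκ, hh]
  have hrank := (LinearMap.finrank_le_finrank_of_injective (f := Λ.codRestrict W hmem)
    fun a b h => hinj (congrArg Subtype.val h)).trans (finrank_initialSpan_le _ _)
  rw [Module.finrank_prod, Module.finrank_fin_fun, Module.finrank_fintype_fun_eq_card] at hrank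
  omega

theorem exists_frobenius_relation [Finite K] (hb : IsPoleBasis K v T e c b) (p μ : ℕ)
    [Fact p.Prime] [CharP R p] {k m : ℕ}
    (hdim : (c + k) * p ^ μ + (c + m) + 1 < (k + 1) * (m + 1)) :
    ∃ κ : Fin (m + 1) → Fin (k + 1) → K, κ ≠ 0 ∧
      ∑ i, window b c k (κ i) ^ p ^ μ * b (c + i) = 0 := by
  have := Fintype.ofFinite K
  set W := initialSpan K b ((c + k) * p ^ μ + (c + m))
  let Ψ : (Fin (m + 1) → Fin (k + 1) → K) →+ R :=
    AddMonoidHom.mk' (fun κ => ∑ i, window b c k (κ i) ^ p ^ μ * b (c + i)) fun κ κ' => by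
      simp only [Pi.add_apply, map_add, add_pow_char_pow, add_mul, Finset.sum_add_distrib]
  have hmem κ : Ψ κ ∈ W := by
    change ∑ i, window b c k (κ i) ^ p ^ μ * b (c + i) ∈ W
    refine W.sum_mem fun i _ => hb.mem_initialSpan_of_le _ _ ?_
    calc v (window b c k (κ i) ^ p ^ μ * b (c + i)) ^ e
        = (v (window b c k (κ i)) ^ e) ^ p ^ μ * T ^ (c + i) := by
          rw [map_mul, mul_pow, hb.valuation_pow_eq _ (Nat.le_add_right _ _), map_pow,
            pow_right_comm]
      _ ≤ (T ^ (c + k)) ^ p ^ μ * T ^ (c + m) :=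
          mul_le_mul' (pow_le_pow_left' (hb.valuation_window_pow_le _) _)
            (pow_le_pow_right₀ hb.one_lt.le (by omega))
      _ = T ^ ((c + k) * p ^ μ + (c + m)) := by rw [← pow_mul, ← pow_add]
  have : Finite W := Module.finite_of_finite K
  have := Fintype.ofFinite W
  have hcard : Fintype.card W < Fintype.card (Fin (m + 1) → Fin (k + 1) → K) := by
    rw [Module.card_eq_pow_finrank (K := K)]
    simp only [Fintype.card_pi, Finset.prod_const, Finset.card_univ, Fintype.card_fin]
    rw [← pow_mul]
    exact pow_lt_pow_right₀ Fintype.one_lt_card ((finrank_initialSpan_le _ _).trans_lt hdim)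
  obtain ⟨κ₁, κ₂, hne, heq⟩ :=
    Fintype.exists_ne_map_eq_of_card_lt (fun κ => (⟨Ψ κ, hmem κ⟩ : W)) hcard
  refine ⟨κ₁ - κ₂, sub_ne_zero.2 hne, ?_⟩
  change Ψ (κ₁ - κ₂) = 0
  rw [map_sub, sub_eq_zero]
  exact congrArg Subtype.val heq

-- The pole orders `c + t + Q * (c + i)` of the summands are distinct because `c + t < Q`.
theorem exists_valuation_sum_window_mul_pow_eq [Finite K] (hb : IsPoleBasis K v T e c b)
    {k m Q : ℕ} (hQ : c + k < Q) {κ : Fin (m + 1) → Fin (k + 1) → K} (hκ : κ ≠ 0) :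
    ∃ D ≤ c + k + Q * (c + m), v (∑ i, window b c k (κ i) * b (c + i) ^ Q) ^ e = T ^ D := by
  classical
  have hterm i : ∃ t ≤ k, κ i ≠ 0 →
      v (window b c k (κ i) * b (c + i) ^ Q) ^ e = T ^ (c + t + Q * (c + i)) := by
    by_cases hi : κ i = 0
    · exact ⟨0, k.zero_le, fun h => (h hi).elim⟩
    obtain ⟨t, ht, hv⟩ := hb.exists_valuation_window_pow_eq hi
    refine ⟨t, ht, fun _ => ?_⟩
    rw [map_mul, mul_pow, hv, map_pow, pow_right_comm, hb.valuation_pow_eq _ (Nat.le_add_right _ _),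
      ← pow_mul, ← pow_add, mul_comm Q]
  choose t ht hv using hterm
  have hdiv (i : Fin (m + 1)) : (c + t i + Q * (c + i)) / Q = c + i := by
    have := ht i
    rw [Nat.add_mul_div_left _ _ (by omega), Nat.div_eq_of_lt (by omega), zero_add]
  obtain ⟨i₀, hi₀⟩ := Function.ne_iff.1 hκ
  obtain ⟨j, -, -, hj⟩ := exists_valuation_sum_pow_eq v hb.one_lt
    (s := Finset.univ.filter fun i => κ i ≠ 0) ⟨i₀, by simpa using hi₀⟩
    (ω := fun i => c + t i + Q * (c + i))
    (fun i _ i' _ h => Fin.ext (by have := congrArg (· / Q) h; simp only [hdiv] at this; omega))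
    (fun i hi => hv i (Finset.mem_filter.1 hi).2)
  refine ⟨c + t j + Q * (c + j), ?_, ?_⟩
  · have := ht j
    have : Q * (c + j) ≤ Q * (c + m) := Nat.mul_le_mul_left _ (by omega)
    omega
  · rw [← hj, Finset.sum_filter_of_ne]
    rintro i - h hi
    exact h (by rw [hi, map_zero, zero_mul])

theorem eval_auxiliary_eq_zero {k m : ℕ} [Finite K] {p μ n : ℕ} [Fact p.Prime] [CharP K p]
    (hq : Nat.card K = p ^ n) (hμ : μ ≤ n) {κ : Fin (m + 1) → Fin (k + 1) → K}
    (hκ : ∑ i, window b c k (κ i) ^ p ^ μ * b (c + i) = 0) (P : R →ₐ[K] K) :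
    P (∑ i, window b c k (κ i) * b (c + i) ^ p ^ (n - μ)) = 0 := by
  have := Fintype.ofFinite K
  refine eq_zero_of_pow_eq_zero (n := p ^ μ) ?_
  rw [← map_zero P, ← hκ, map_sum, map_sum, sum_pow_char_pow]
  refine Finset.sum_congr rfl fun i _ => ?_
  rw [map_mul, map_mul, mul_pow, map_pow, map_pow, ← pow_mul, ← pow_add, Nat.sub_add_cancel hμ,
    ← hq, Nat.card_eq_fintype_card, FiniteField.pow_card]

theorem card_points_le [Finite K] (hb : IsPoleBasis K v T e c b) {S : Type*} [Fintype S]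
    {ev : S → R →ₐ[K] K} (hev : IsSeparating ev) {p n μ : ℕ} [Fact p.Prime] [CharP K p]
    (hq : Nat.card K = p ^ n) (hμ : μ ≤ n) (hlt : c + p ^ μ + 1 < p ^ (n - μ)) :
    Fintype.card S ≤ p ^ n + p ^ (n - μ) * (2 * c + 1) + p ^ μ + 2 * c + 2 := by
  have := hb.nontrivial
  have : CharP R p := charP_of_injective_algebraMap (algebraMap K R).injective p
  obtain ⟨κ, hκ, hrel⟩ := hb.exists_frobenius_relation p μ (k := p ^ μ + 1) (m := p ^ μ + c)
    (by generalize p ^ μ = B; nlinarith)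
  obtain ⟨D, hD, hv⟩ := hb.exists_valuation_sum_window_mul_pow_eq (by omega) hκ
  have hzeros := hb.card_zeros_le hev hv fun P => eval_auxiliary_eq_zero hq hμ hrel (ev P)
  have hpow : p ^ (n - μ) * p ^ μ = p ^ n := by rw [← pow_add, Nat.sub_add_cancel hμ]
  generalize p ^ μ = B, p ^ (n - μ) = Q at *
  linarith [mul_add Q (2 * c) B]

end IsPoleBasis

end PoleOrders

section SeparatedCurve

theorem exists_place_one_lt {K : Type} [Field K] (F G : K[X]) (hG : G.natDegree ≠ 0) :
    ∃ (L : Type) (_ : Field L) (_ : Algebra K L) (Γ : Type) (_ : LinearOrderedCommGroupWithZero Γ)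
      (v : Valuation L Γ) (x y : L), 1 < v x ∧ aeval x F = aeval y G := by
  let L := AlgebraicClosure (RatFunc K)
  let x : L := algebraMap (RatFunc K) L RatFunc.X
  have hx : Transcendental K x := by
    rw [transcendental_algebraMap_iff (algebraMap (RatFunc K) L).injective]
    exact RatFunc.transcendental_X
  obtain ⟨y, hy⟩ : ∃ y : L, aeval y G = aeval x F := by
    have hdeg : (G.map (algebraMap K L) - C (aeval x F)).natDegree ≠ 0 := by
      rwa [natDegree_sub_C, natDegree_map]
    obtain ⟨y, hy⟩ := IsAlgClosed.exists_root _ fun h => hdeg (natDegree_eq_of_degree_eq_some h)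
    exact ⟨y, by simpa [IsRoot, sub_eq_zero, aeval_def, eval_map] using hy⟩
  have hxR : x ∉ (integralClosure K L).toSubring := fun h => hx h.isAlgebraic
  have : IsIntegrallyClosedIn (integralClosure K L).toSubring L :=
    inferInstanceAs (IsIntegrallyClosedIn (integralClosure K L) L)
  obtain ⟨V, -, hV⟩ := Subring.exists_le_valuationSubring_of_isIntegrallyClosedIn hxR
  exact ⟨L, inferInstance, inferInstance, _, inferInstance, V.valuation, x, y,
    not_le.1 fun h => hV ((V.valuation_le_one_iff x).1 h), hy.symm⟩

variable {K : Type*} [Field K]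

/-- The polynomial `G(y) - F(x)` in `K[x][y]`. -/
noncomputable def separatedPoly (F G : K[X]) : K[X][X] := G.map C - C F

theorem monic_separatedPoly (F : K[X]) {G : K[X]} (hG : G.Monic) (hG₀ : G.natDegree ≠ 0) :
    (separatedPoly F G).Monic := by
  refine (hG.map C).sub_of_left ?_
  rw [hG.degree_map]
  exact degree_C_le.trans_lt (natDegree_pos_iff_degree_pos.1 (Nat.pos_of_ne_zero hG₀))

theorem natDegree_separatedPoly (F G : K[X]) : (separatedPoly F G).natDegree = G.natDegree := by
  rw [separatedPoly, natDegree_sub_C, natDegree_map_eq_of_injective C_injective]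

/-- The coordinate ring `K[x, y] / (G(y) - F(x))` of the affine curve `F(x) = G(y)`. -/
abbrev CurveRing (F G : K[X]) : Type _ := AdjoinRoot (separatedPoly F G)

namespace CurveRing

variable (F G : K[X])

/-- The coordinate function `x` of the curve `F(x) = G(y)`. -/
noncomputable def x : CurveRing F G := AdjoinRoot.of _ X

/-- The coordinate function `y` of the curve `F(x) = G(y)`. -/
noncomputable def y : CurveRing F G := AdjoinRoot.root _

variable {F G} {L : Type*} [CommRing L] [Algebra K L] {x₀ y₀ : L}

/-- The homomorphism given by a point `(x₀, y₀)` of the curve `F(x) = G(y)`. -/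
noncomputable def lift (h : aeval x₀ F = aeval y₀ G) : CurveRing F G →ₐ[K] L :=
  AdjoinRoot.liftAlgHom _ (aeval x₀) y₀ <| by
    have : ((aeval x₀ : K[X] →ₐ[K] L) : K[X] →+* L).comp C = algebraMap K L := by ext; simp
    rw [separatedPoly, eval₂_sub, eval₂_C, eval₂_map, this, ← aeval_def, ← h]
    exact sub_self _

@[simp]
theorem lift_x (h : aeval x₀ F = aeval y₀ G) : lift h (x F G) = x₀ :=
  (AdjoinRoot.liftAlgHom_of _ _ _ _ _).trans (aeval_X _)

@[simp]
theorem lift_y (h : aeval x₀ F = aeval y₀ G) : lift h (y F G) = y₀ :=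
  AdjoinRoot.liftAlgHom_root _ _ _ _

theorem isSeparating_lift [Finite K] :
    IsSeparating fun P : {P : K × K // aeval P.1 F = aeval P.2 G} => lift P.2 := by
  have := Fintype.ofFinite K
  have hq : Fintype.card K - 1 ≠ 0 := Nat.sub_ne_zero_of_lt Fintype.one_lt_card
  rintro ⟨P, hP⟩
  refine ⟨(1 - (x F G - algebraMap K _ P.1) ^ (Fintype.card K - 1)) *
    (1 - (y F G - algebraMap K _ P.2) ^ (Fintype.card K - 1)), by simp [hq], ?_⟩
  rintro ⟨P', hP'⟩ hne
  simp only [map_mul, map_sub, map_one, map_pow, lift_x, lift_y, AlgHom.commutes,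
    Algebra.algebraMap_self, RingHom.id_apply]
  by_cases h₁ : P'.1 = P.1
  · have h₂ : P'.2 - P.2 ≠ 0 := fun h₂ => hne (Subtype.ext (Prod.ext h₁ (sub_eq_zero.1 h₂)))
    rw [FiniteField.pow_card_sub_one_eq_one _ h₂, sub_self, mul_zero]
  · rw [FiniteField.pow_card_sub_one_eq_one _ (sub_ne_zero.2 h₁), sub_self, zero_mul]

theorem of_mem_span_x_pow (u : K[X]) :
    AdjoinRoot.of (separatedPoly F G) u ∈ Submodule.span K (Set.range fun i : ℕ => x F G ^ i) := by
  have hu : AdjoinRoot.of (separatedPoly F G) u = aeval (x F G) u := by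
    have : IsScalarTower.toAlgHom K K[X] (CurveRing F G) = aeval (x F G) :=
      Polynomial.algHom_ext (by rw [aeval_X]; rfl)
    exact DFunLike.congr_fun this u
  rw [hu, aeval_eq_sum_range]
  exact sum_mem fun i _ => Submodule.smul_mem _ _ (Submodule.subset_span ⟨i, rfl⟩)

theorem span_monomials_eq_top (hG : G.Monic) (hG₀ : G.natDegree ≠ 0) :
    Submodule.span K (Set.range fun ij : ℕ × Fin G.natDegree => x F G ^ ij.1 * y F G ^ (ij.2 : ℕ)) =
      ⊤ := by
  refine eq_top_iff.2 fun f _ => ?_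
  obtain ⟨g, rfl⟩ := AdjoinRoot.mk_surjective f
  have hmonic := monic_separatedPoly F hG hG₀
  have hlt : (g %ₘ separatedPoly F G).natDegree < G.natDegree := by
    rw [← natDegree_separatedPoly F G] at hG₀ ⊢
    exact natDegree_modByMonic_lt g hmonic fun h => hG₀ (by rw [h, natDegree_one])
  have hmod : AdjoinRoot.mk (separatedPoly F G) g = AdjoinRoot.mk _ (g %ₘ separatedPoly F G) := by
    conv_lhs => rw [← modByMonic_add_div g (separatedPoly F G)]
    simp
  rw [hmod, as_sum_range' _ _ hlt, map_sum]
  refine sum_mem fun j hj => ?_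
  rw [← C_mul_X_pow_eq_monomial, map_mul, map_pow, AdjoinRoot.mk_X, AdjoinRoot.mk_C]
  have hspan := of_mem_span_x_pow (F := F) (G := G) ((g %ₘ separatedPoly F G).coeff j)
  generalize AdjoinRoot.of (separatedPoly F G) _ = u at hspan ⊢
  induction hspan using Submodule.span_induction with
  | mem _ h =>
    obtain ⟨i, rfl⟩ := h
    exact Submodule.subset_span ⟨(i, ⟨j, Finset.mem_range.1 hj⟩), rfl⟩
  | zero => simp
  | add _ _ _ _ h₁ h₂ => rw [add_mul]; exact add_mem h₁ h₂
  | smul c _ _ h => rw [smul_mul_assoc]; exact Submodule.smul_mem _ c h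

end CurveRing

/-- The pole order of `x ^ i * y ^ j` at a place where `x` has a pole of order `e` and `y` has a
pole of order `d`. -/
def poleOrder (d e : ℕ) (ij : ℕ × Fin e) : ℕ := e * ij.1 + d * ij.2

theorem exists_poleOrder_eq {d e : ℕ} (he : e ≠ 0) (hde : d.Coprime e) {n : ℕ} (hn : d * e ≤ n) :
    ∃ ij, poleOrder d e ij = n := by
  obtain ⟨j, hj, h⟩ := Nat.exists_mul_mod_eq_of_coprime n hde he
  have hjn : d * j ≤ n := (Nat.mul_le_mul_left d hj.le).trans hn
  obtain ⟨i, hi⟩ := (Nat.modEq_iff_dvd' hjn).1 h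
  exact ⟨(i, ⟨j, hj⟩), by simp only [poleOrder]; omega⟩

theorem poleOrder_injective {d e : ℕ} (hde : d.Coprime e) : Function.Injective (poleOrder d e) := by
  rintro ⟨i, j, hj⟩ ⟨i', j', hj'⟩ h
  simp only [poleOrder] at h
  have hmul : d * j ≡ d * j' [MOD e] := by
    have := congrArg (· % e) h
    simpa [Nat.ModEq, Nat.mul_add_mod] using this
  obtain rfl : j = j' :=
    (hmul.cancel_left_of_coprime (Nat.coprime_comm.1 hde)).eq_of_lt_of_lt hj hj'
  obtain rfl : i = i' := Nat.eq_of_mul_eq_mul_left (by omega : 0 < e) (by omega)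
  rfl

namespace CurveRing

variable (F G : K[X])

/-- The monomial `x ^ i * y ^ j` with `j < natDegree G` of pole order `n`, and `0` if there is no
such monomial. -/
noncomputable def poleBasis : ℕ → CurveRing F G :=
  Function.extend (poleOrder F.natDegree G.natDegree)
    (fun ij => x F G ^ ij.1 * y F G ^ (ij.2 : ℕ)) 0

variable {F G} {Γ : Type*} [LinearOrderedCommGroupWithZero Γ] {v : Valuation (CurveRing F G) Γ}

theorem poleBasis_poleOrder (hFG : F.natDegree.Coprime G.natDegree) (ij : ℕ × Fin G.natDegree) :
    poleBasis F G (poleOrder F.natDegree G.natDegree ij) = x F G ^ ij.1 * y F G ^ (ij.2 : ℕ) :=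
  (poleOrder_injective hFG).extend_apply _ _ ij

theorem valuation_poleBasis_pow_eq (hFG : F.natDegree.Coprime G.natDegree)
    (hv : v (y F G) ^ G.natDegree = v (x F G) ^ F.natDegree) (ij : ℕ × Fin G.natDegree) :
    v (poleBasis F G (poleOrder F.natDegree G.natDegree ij)) ^ G.natDegree =
      v (x F G) ^ poleOrder F.natDegree G.natDegree ij := by
  rw [poleBasis_poleOrder hFG, map_mul, map_pow, map_pow, mul_pow, pow_right_comm (v (y F G)), hv,
    ← pow_mul, ← pow_mul, ← pow_add, mul_comm ij.1, poleOrder]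

theorem exists_eq_sum_poleBasis [Finite K] (hG : G.Monic) (hG₀ : G.natDegree ≠ 0)
    (hFG : F.natDegree.Coprime G.natDegree) (hx : 1 < v (x F G))
    (hv : v (y F G) ^ G.natDegree = v (x F G) ^ F.natDegree) {f : CurveRing F G} (hf : f ≠ 0) :
    ∃ n, f ∈ initialSpan K (poleBasis F G) n ∧ v f ^ G.natDegree = v (x F G) ^ n := by
  obtain ⟨c, hc⟩ := Finsupp.mem_span_range_iff_exists_finsupp.1
    ((span_monomials_eq_top (F := F) hG hG₀).ge (Submodule.mem_top (x := f)))
  simp only [← poleBasis_poleOrder hFG] at hc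
  have hsupp : c.support.Nonempty := by
    rw [Finsupp.support_nonempty_iff]
    rintro rfl
    exact hf (by simpa using hc.symm)
  obtain ⟨j, -, hmax, hj⟩ := exists_valuation_sum_smul_pow_eq v hx hsupp
    (poleOrder_injective hFG).injOn (fun _ => Finsupp.mem_support_iff.1)
    fun i _ => valuation_poleBasis_pow_eq hFG hv i
  rw [show ∑ i ∈ c.support, c i • _ = f from hc] at hj
  refine ⟨_, ?_, hj⟩
  rw [← hc]
  exact sum_mem fun i hi => Submodule.smul_mem _ _ (mem_initialSpan _ (hmax i hi))

theorem isPoleBasis_poleBasis [Finite K] (hG : G.Monic) (hG₀ : G.natDegree ≠ 0)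
    (hFG : F.natDegree.Coprime G.natDegree) (hx : 1 < v (x F G))
    (hv : v (y F G) ^ G.natDegree = v (x F G) ^ F.natDegree) :
    IsPoleBasis K v (v (x F G)) G.natDegree (F.natDegree * G.natDegree) (poleBasis F G) where
  one_lt := hx
  exponent_ne_zero := hG₀
  valuation_pow_eq n hn := by
    obtain ⟨ij, rfl⟩ := exists_poleOrder_eq hG₀ hFG hn
    exact valuation_poleBasis_pow_eq hFG hv ij
  mem_initialSpan_of_le f M hM := by
    obtain rfl | hf := eq_or_ne f 0
    · exact zero_mem _
    obtain ⟨n, hn, hfn⟩ := exists_eq_sum_poleBasis hG hG₀ hFG hx hv hf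
    rw [hfn, pow_le_pow_iff_right₀ hx] at hM
    exact initialSpan_mono _ hM hn
  exists_valuation_pow_le f := by
    obtain rfl | hf := eq_or_ne f 0
    · exact ⟨0, by simp [zero_pow hG₀]⟩
    obtain ⟨n, -, hfn⟩ := exists_eq_sum_poleBasis hG hG₀ hFG hx hv hf
    exact ⟨n, hfn.le⟩

end CurveRing

theorem exists_isPoleBasis_curveRing {K : Type} [Field K] [Finite K] {F G : K[X]} (hG : G.Monic)
    (hF₀ : F.natDegree ≠ 0) (hG₀ : G.natDegree ≠ 0) (hFG : F.natDegree.Coprime G.natDegree) :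
    ∃ (Γ : Type) (_ : LinearOrderedCommGroupWithZero Γ) (v : Valuation (CurveRing F G) Γ) (T : Γ)
      (b : ℕ → CurveRing F G), IsPoleBasis K v T G.natDegree (F.natDegree * G.natDegree) b := by
  obtain ⟨L, _, _, Γ, _, V, x, y, hx, hxy⟩ := exists_place_one_lt F G hG₀
  have hF : V (aeval x F) = V x ^ F.natDegree :=
    valuation_aeval_eq V hx fun h => hF₀ (by rw [h, natDegree_zero])
  have hy : 1 < V y := by
    by_contra h
    have hle := valuation_aeval_le_one V (not_lt.1 h) G
    rw [← hxy, hF] at hle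
    exact hle.not_gt (one_lt_pow₀ hx hF₀)
  have hV : V y ^ G.natDegree = V x ^ F.natDegree := by
    rw [← hF, hxy, valuation_aeval_eq V hy hG.ne_zero]
  refine ⟨Γ, inferInstance, V.comap (CurveRing.lift hxy : CurveRing F G →+* L), _, _,
    CurveRing.isPoleBasis_poleBasis hG hG₀ hFG ?_ ?_⟩ <;> simpa

section Count

variable {K : Type} [Field K] [Finite K] {F G : K[X]} {p n μ : ℕ} [Fact p.Prime] [CharP K p]

theorem card_separatedCurve_le_of_monic (hG : G.Monic) (hF₀ : F.natDegree ≠ 0)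
    (hG₀ : G.natDegree ≠ 0) (hFG : F.natDegree.Coprime G.natDegree) (hq : Nat.card K = p ^ n)
    (hμ : μ ≤ n) (hlt : F.natDegree * G.natDegree + p ^ μ + 1 < p ^ (n - μ)) :
    Nat.card {P : K × K // F.eval P.1 = G.eval P.2} ≤
      p ^ n + p ^ (n - μ) * (2 * (F.natDegree * G.natDegree) + 1) + p ^ μ +
        2 * (F.natDegree * G.natDegree) + 2 := by
  classical
  simp only [← coe_aeval_eq_eval]
  have := Fintype.ofFinite {P : K × K // aeval P.1 F = aeval P.2 G}
  obtain ⟨Γ, _, v, T, b, hb⟩ := exists_isPoleBasis_curveRing hG hF₀ hG₀ hFG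
  rw [Nat.card_eq_fintype_card]
  exact hb.card_points_le CurveRing.isSeparating_lift hq hμ hlt

theorem card_separatedCurve_le (hF₀ : F.natDegree ≠ 0) (hG₀ : G.natDegree ≠ 0)
    (hFG : F.natDegree.Coprime G.natDegree) (hq : Nat.card K = p ^ n)
    (hμ : μ ≤ n) (hlt : F.natDegree * G.natDegree + p ^ μ + 1 < p ^ (n - μ)) :
    Nat.card {P : K × K // F.eval P.1 = G.eval P.2} ≤
      p ^ n + p ^ (n - μ) * (2 * (F.natDegree * G.natDegree) + 1) + p ^ μ +
        2 * (F.natDegree * G.natDegree) + 2 := by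
  have hG : G ≠ 0 := fun h => hG₀ (by rw [h, natDegree_zero])
  have hl : G.leadingCoeff⁻¹ ≠ 0 := inv_ne_zero (leadingCoeff_ne_zero.2 hG)
  have hdeg (H : K[X]) : (C G.leadingCoeff⁻¹ * H).natDegree = H.natDegree := natDegree_C_mul hl
  have hmonic : (C G.leadingCoeff⁻¹ * G).Monic := by
    rw [mul_comm]; exact monic_mul_leadingCoeff_inv hG
  have := card_separatedCurve_le_of_monic (F := C G.leadingCoeff⁻¹ * F) (n := n) (μ := μ) hmonic
  simp only [hdeg, eval_mul, eval_C, mul_right_inj' hl] at this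
  exact this hF₀ hG₀ hFG hq hμ hlt

end Count

end SeparatedCurve

section LeadingMatrix

/-- The entries of the polynomial matrix `M` have degree at most `D`, and `A` is the matrix of
their coefficients in degree `D`. -/
def HasLeadingMatrix {R l m : Type*} [Semiring R] (M : Matrix l m R[X]) (D : ℕ)
    (A : Matrix l m R) : Prop :=
  ∀ i j, (M i j).natDegree ≤ D ∧ (M i j).coeff D = A i j

theorem HasLeadingMatrix.mul {R l m n : Type*} [Semiring R] [Fintype m] {M : Matrix l m R[X]}
    {N : Matrix m n R[X]} {D E : ℕ} {A : Matrix l m R} {B : Matrix m n R}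
    (hM : HasLeadingMatrix M D A) (hN : HasLeadingMatrix N E B) :
    HasLeadingMatrix (M * N) (D + E) (A * B) := by
  refine fun i j => ⟨natDegree_sum_le_of_forall_le _ _ fun k _ =>
    natDegree_mul_le_of_le (hM i k).1 (hN k j).1, ?_⟩
  simp only [mul_apply, finsetSum_coeff]
  exact Finset.sum_congr rfl fun k _ => by
    rw [coeff_mul_add_eq_of_natDegree_le (hM i k).1 (hN k j).1, (hM i k).2, (hN k j).2]

variable {R : Type*} [CommRing R]

/-- The lower left entry of `M` has the maximal degree `D` among all entries. -/
def LeadsLowerLeft (M : Matrix (Fin 2) (Fin 2) R[X]) (D : ℕ) : Prop :=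
  ∃ A, HasLeadingMatrix M D A ∧ A 1 0 ≠ 0

/-- The upper right entry of `M` has degree `D`, and all other entries have smaller degree. -/
def LeadsUpperRight (M : Matrix (Fin 2) (Fin 2) R[X]) (D : ℕ) : Prop :=
  ∃ c, c ≠ 0 ∧ HasLeadingMatrix M D !![0, c; 0, 0]

/-- The lower right entry of `M` has the maximal degree `D` among all entries, and the entries of
the first column have smaller degree. -/
def LeadsLowerRight (M : Matrix (Fin 2) (Fin 2) R[X]) (D : ℕ) : Prop :=
  ∃ b d, d ≠ 0 ∧ HasLeadingMatrix M D !![0, b; 0, d]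

variable {M N : Matrix (Fin 2) (Fin 2) R[X]} {D E : ℕ}

theorem LeadsLowerRight.natDegree_trace (hM : LeadsLowerRight M D) : M.trace.natDegree = D := by
  obtain ⟨b, d, hd, h⟩ := hM
  rw [trace_fin_two]
  refine natDegree_eq_of_le_of_coeff_ne_zero (natDegree_add_le_of_degree_le (h 0 0).1 (h 1 1).1) ?_
  simpa [(h 0 0).2, (h 1 1).2] using hd

variable [IsDomain R]

theorem LeadsLowerLeft.mul_leadsUpperRight (hM : LeadsLowerLeft M D) (hN : LeadsUpperRight N E) :
    LeadsLowerRight (M * N) (D + E) := by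
  obtain ⟨A, hA, hA'⟩ := hM
  obtain ⟨c, hc, hB⟩ := hN
  refine ⟨A 0 0 * c, A 1 0 * c, mul_ne_zero hA' hc, ?_⟩
  convert hA.mul hB using 1
  ext i j
  fin_cases i <;> fin_cases j <;> simp [mul_apply]

theorem LeadsLowerRight.mul (hM : LeadsLowerRight M D) (hN : LeadsLowerRight N E) :
    LeadsLowerRight (M * N) (D + E) := by
  obtain ⟨b, d, hd, hA⟩ := hM
  obtain ⟨b', d', hd', hB⟩ := hN
  refine ⟨b * d', d * d', mul_ne_zero hd hd', ?_⟩
  simpa using hA.mul hB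

theorem LeadsLowerRight.mul_leadsLowerLeft (hM : LeadsLowerRight M D) (hN : LeadsLowerLeft N E) :
    LeadsLowerLeft (M * N) (D + E) := by
  obtain ⟨b, d, hd, hA⟩ := hM
  obtain ⟨B, hB, hB'⟩ := hN
  exact ⟨_, hA.mul hB, by simpa [mul_apply] using ⟨hd, hB'⟩⟩

theorem LeadsLowerLeft.sandwich {L : Matrix (Fin 2) (Fin 2) R[X]} {C : ℕ}
    (hM : LeadsLowerLeft M D) (hL : LeadsUpperRight L C) (hN : LeadsUpperRight N E) :
    LeadsUpperRight (L * M * N) (C + D + E) := by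
  obtain ⟨A, hA, hA'⟩ := hM
  obtain ⟨c, hc, hB⟩ := hL
  obtain ⟨d, hd, hC⟩ := hN
  refine ⟨c * A 1 0 * d, mul_ne_zero (mul_ne_zero hc hA') hd, ?_⟩
  convert (hB.mul hA).mul hC using 1
  ext i j
  fin_cases i <;> fin_cases j <;> simp [mul_apply, vecMul, dotProduct]

end LeadingMatrix

section ShearBlocks

theorem natDegree_add_eq_max {R : Type*} [Semiring R] {P Q : R[X]}
    (h : P.natDegree ≠ Q.natDegree) : (P + Q).natDegree = max P.natDegree Q.natDegree := by
  rcases h.lt_or_gt with h | h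
  · rw [natDegree_add_eq_right_of_natDegree_lt h, max_eq_right h.le]
  · rw [natDegree_add_eq_left_of_natDegree_lt h, max_eq_left h.le]

/-- The upper unitriangular matrix with upper right entry `s`. -/
def shear {R : Type} [CommRing R] (s : R) : SL2 R := ⟨!![1, s; 0, 1], by simp⟩

section

variable {R : Type} [CommRing R]

theorem coe_shear (s : R) : (shear s : Matrix (Fin 2) (Fin 2) R) = !![1, s; 0, 1] := rfl

theorem shear_add (s t : R) : shear (s + t) = shear s * shear t :=
  Subtype.ext <| by simp [coe_shear, add_comm]

theorem shear_zero : shear (0 : R) = 1 :=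
  Subtype.ext <| by simp [coe_shear, one_fin_two]

theorem shear_neg (s : R) : shear (-s) = (shear s)⁻¹ := by
  rw [eq_inv_iff_mul_eq_one, ← shear_add, neg_add_cancel, shear_zero]

theorem leadsUpperRight_shear {P : R[X]} (hP : P.natDegree ≠ 0) :
    LeadsUpperRight (shear P : Matrix (Fin 2) (Fin 2) R[X]) P.natDegree := by
  refine ⟨P.leadingCoeff, leadingCoeff_ne_zero.2 (by rintro rfl; simp at hP), fun i j => ?_⟩
  fin_cases i <;> fin_cases j <;> simp [coe_shear, coeff_one, hP]

/-- The embedding of the constant matrices in `SL2 R[X]`. -/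
noncomputable def constSL2 : SL2 R →* SL2 R[X] := Matrix.SpecialLinearGroup.map (C : R →+* R[X])

theorem leadsLowerLeft_constSL2 {g : SL2 R} (hg : g 1 0 ≠ 0) :
    LeadsLowerLeft (constSL2 g : Matrix (Fin 2) (Fin 2) R[X]) 0 :=
  ⟨g, fun i j => by simp [constSL2], hg⟩

/-- The matrix `g` multiplied by the shears with entries `X ^ m` on the left and `X ^ m'` on the
right: substituting such blocks into a word makes the degree of its trace visible. -/
noncomputable def shearBlock (m m' : ℕ) (g : SL2 R) : SL2 R[X] :=
  shear (X ^ m) * constSL2 g * shear (X ^ m')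

theorem inv_shearBlock (m m' : ℕ) (g : SL2 R) :
    (shearBlock m m' g)⁻¹ = shear (-X ^ m') * constSL2 g⁻¹ * shear (-X ^ m) := by
  simp [shearBlock, shear_neg, mul_assoc]

end

variable {K : Type} [CommRing K] [IsDomain K]

theorem exists_pow_shear_mul_shear_eq {L R : K[X]} (hLR : (R + L).natDegree ≠ 0) {M : SL2 K[X]}
    (hM : LeadsLowerLeft (M : Matrix (Fin 2) (Fin 2) K[X]) 0) (n : ℕ) :
    ∃ N : SL2 K[X], LeadsLowerLeft (N : Matrix (Fin 2) (Fin 2) K[X]) (n * (R + L).natDegree) ∧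
      (shear L * M * shear R) ^ (n + 1) = shear L * N * shear R := by
  induction n with
  | zero => exact ⟨M, by simpa using hM, by simp⟩
  | succ n ih =>
    obtain ⟨N, hN, h⟩ := ih
    refine ⟨M * shear (R + L) * N, ?_, ?_⟩
    · have := (hM.mul_leadsUpperRight (leadsUpperRight_shear hLR)).mul_leadsLowerLeft hN
      rwa [zero_add, ← one_add_mul, add_comm 1 n] at this
    · rw [pow_succ', h, shear_add]
      simp only [mul_assoc]

/-- The exponent `m` if `c` is positive, and `m'` otherwise: the left shear of the power
`shearBlock m m' g ^ c` has degree `signSelect c m m'`, its right shear `signSelect c m' m`. -/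
def signSelect (c : ℤ) (m m' : ℕ) : ℕ := if 0 < c then m else m'

theorem exists_zpow_shearBlock_eq {m m' : ℕ} (hm : m ≠ m') {g : SL2 K} (hg : g 1 0 ≠ 0) {c : ℤ}
    (hc : c ≠ 0) :
    ∃ (L R : K[X]) (N : SL2 K[X]), L.natDegree = signSelect c m m' ∧
      R.natDegree = signSelect c m' m ∧
      LeadsLowerLeft (N : Matrix (Fin 2) (Fin 2) K[X]) ((c.natAbs - 1) * max m m') ∧
      shearBlock m m' g ^ c = shear L * N * shear R := by
  obtain ⟨n, hn⟩ : ∃ n, c.natAbs = n + 1 := ⟨c.natAbs - 1, by lia⟩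
  rcases lt_or_gt_of_ne hc with h | h
  · have hdeg : (-X ^ m + -X ^ m' : K[X]).natDegree = max m m' := by
      rw [natDegree_add_eq_max] <;> simp [hm]
    have hg' : g⁻¹ 1 0 ≠ 0 := by simpa [Matrix.SpecialLinearGroup.SL2_inv_expl] using hg
    obtain ⟨N, hN, hpow⟩ :=
      exists_pow_shear_mul_shear_eq (L := -X ^ m') (R := -X ^ m) (by omega)
        (leadsLowerLeft_constSL2 hg') n
    refine ⟨-X ^ m', -X ^ m, N, ?_, ?_, ?_, ?_⟩
    · simp [signSelect, h.not_gt]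
    · simp [signSelect, h.not_gt]
    · rwa [hn, Nat.add_sub_cancel, ← hdeg]
    · rw [← hpow, ← inv_shearBlock, show c = -((n + 1 : ℕ) : ℤ) by lia, _root_.zpow_neg,
        zpow_natCast, inv_pow]
  · have hdeg : (X ^ m' + X ^ m : K[X]).natDegree = max m m' := by
      rw [natDegree_add_eq_max] <;> simp [hm.symm, max_comm]
    obtain ⟨N, hN, hpow⟩ :=
      exists_pow_shear_mul_shear_eq (L := X ^ m) (R := X ^ m') (by omega)
        (leadsLowerLeft_constSL2 hg) n
    refine ⟨X ^ m, X ^ m', N, ?_, ?_, ?_, ?_⟩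
    · simp [signSelect, h]
    · simp [signSelect, h]
    · rwa [hn, Nat.add_sub_cancel, ← hdeg]
    · rw [← hpow, show c = ((n + 1 : ℕ) : ℤ) by lia, zpow_natCast, shearBlock]

theorem leadsLowerRight_prod_ofFn {n : ℕ} {Z : Fin (n + 1) → SL2 K[X]} {D : Fin (n + 1) → ℕ}
    (h : ∀ i, LeadsLowerRight (Z i : Matrix (Fin 2) (Fin 2) K[X]) (D i)) :
    LeadsLowerRight ((List.ofFn Z).prod : Matrix (Fin 2) (Fin 2) K[X]) (∑ i, D i) := by
  induction n with
  | zero => simpa using h 0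
  | succ n ih =>
    rw [List.ofFn_succ, List.prod_cons, Fin.sum_univ_succ, Matrix.SpecialLinearGroup.coe_mul]
    exact (h 0).mul (ih fun i => h i.succ)

theorem trace_conj {R : Type} [CommRing R] (U Z : SL2 R) :
    trace ((U * Z * U⁻¹ : SL2 R) : Matrix (Fin 2) (Fin 2) R) =
      trace (Z : Matrix (Fin 2) (Fin 2) R) := by
  rw [Matrix.SpecialLinearGroup.coe_mul, trace_mul_comm, ← Matrix.SpecialLinearGroup.coe_mul,
    inv_mul_cancel_left]

theorem prod_ofFn_telescope {G : Type*} [Group G] (k : ℕ) (V : ℕ → G) (Z : Fin k → G) :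
    (List.ofFn fun i : Fin k => V i * Z i * (V (i + 1))⁻¹).prod =
      V 0 * (List.ofFn Z).prod * (V k)⁻¹ := by
  induction k generalizing V with
  | zero => simp
  | succ k ih =>
    have := ih (fun i => V (i + 1)) fun i => Z i.succ
    simp only [List.ofFn_succ, List.prod_cons, Fin.val_succ, Fin.val_zero] at this ⊢
    rw [this]
    simp [mul_assoc]

theorem prod_ofFn_cyclic_telescope {G : Type*} [Group G] {n : ℕ} (U Z : Fin (n + 1) → G) :
    (List.ofFn fun i => U i * Z i * (U (i + 1))⁻¹).prod =
      U 0 * (List.ofFn Z).prod * (U 0)⁻¹ := by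
  have := prod_ofFn_telescope (n + 1) (fun j => U (Fin.ofNat (n + 1) j)) Z
  have hval (i : Fin (n + 1)) : Fin.ofNat (n + 1) i = i := by simp
  have hsucc (i : Fin (n + 1)) : Fin.ofNat (n + 1) (i + 1) = i + 1 := by ext; simp [Fin.val_add]
  have hlast : Fin.ofNat (n + 1) (n + 1) = 0 := by ext; simp
  simpa only [hval, hsucc, hlast, show Fin.ofNat (n + 1) 0 = 0 from rfl] using this

/-- The degree of the trace of `∏ x ^ aᵢ * y ^ bᵢ` for `x = shearBlock m m' g` and
`y = shearBlock k k' g'`. -/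
def traceDegree {n : ℕ} (a b : Fin (n + 1) → ℤ) (m m' k k' : ℕ) : ℕ :=
  ∑ i, (((a i).natAbs - 1) * max m m' + max (signSelect (a i) m' m) (signSelect (b i) k k') +
    (((b i).natAbs - 1) * max k k' +
      max (signSelect (b i) k' k) (signSelect (a (i + 1)) m m')))

theorem natDegree_trace_prod_shearBlock {n : ℕ} {a b : Fin (n + 1) → ℤ} (ha : ∀ i, a i ≠ 0)
    (hb : ∀ i, b i ≠ 0) {m m' k k' : ℕ} (hnd : [m, m', k, k'].Nodup) {g g' : SL2 K}
    (hg : g 1 0 ≠ 0) (hg' : g' 1 0 ≠ 0) :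
    (trace ((List.ofFn fun i => shearBlock m m' g ^ a i * shearBlock k k' g' ^ b i).prod :
      Matrix (Fin 2) (Fin 2) K[X])).natDegree = traceDegree a b m m' k k' := by
  simp only [List.nodup_cons, List.mem_cons, List.not_mem_nil, or_false, not_or] at hnd
  choose L R N hL hR hN hx using fun i =>
    exists_zpow_shearBlock_eq (m := m) (m' := m') (by tauto) hg (ha i)
  choose L' R' N' hL' hR' hN' hy using fun i =>
    exists_zpow_shearBlock_eq (m := k) (m' := k') (by tauto) hg' (hb i)
  have hRL (i) : (R i).natDegree ≠ (L' i).natDegree := by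
    rw [hR, hL', signSelect, signSelect]; split_ifs <;> tauto
  have hRL' (i) : (R' i).natDegree ≠ (L (i + 1)).natDegree := by
    rw [hR', hL, signSelect, signSelect]; split_ifs <;> tauto
  have hconj (i) : (shear (L i))⁻¹ * (shearBlock m m' g ^ a i * shearBlock k k' g' ^ b i) *
      (shear (L (i + 1)))⁻¹⁻¹ =
      (N i * shear (R i + L' i)) * (N' i * shear (R' i + L (i + 1))) := by
    rw [hx, hy, shear_add, shear_add, inv_inv]
    simp only [mul_assoc, inv_mul_cancel_left]
  have hlead {P Q : K[X]} (h : P.natDegree ≠ Q.natDegree) :=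
    natDegree_add_eq_max h ▸ leadsUpperRight_shear (P := P + Q)
      (by rw [natDegree_add_eq_max h]; omega)
  rw [← trace_conj (shear (L 0))⁻¹,
    ← prod_ofFn_cyclic_telescope fun i => (shear (L i))⁻¹]
  refine (leadsLowerRight_prod_ofFn fun i => ?_).natDegree_trace
  have := ((hN i).mul_leadsUpperRight (hlead (hRL i))).mul
    ((hN' i).mul_leadsUpperRight (hlead (hRL' i)))
  rwa [hR, hL', hR', hL, ← Matrix.SpecialLinearGroup.coe_mul, ← Matrix.SpecialLinearGroup.coe_mul,
    ← Matrix.SpecialLinearGroup.coe_mul, ← hconj] at this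

end ShearBlocks

section TraceFamilies

theorem wordEval_wordOf {G : Type*} [Group G] {r : ℕ} (a b : Fin r → ℤ) (x y : G) :
    wordEval (wordOf a b) x y = (List.ofFn fun i => x ^ a i * y ^ b i).prod := by
  simp [wordEval, wordOf, map_list_prod, List.map_ofFn, Function.comp_def]

theorem map_wordEval {G H : Type*} [Group G] [Group H] (f : G →* H) (w : FreeGroup (Fin 2))
    (x y : G) : f (wordEval w x y) = wordEval w (f x) (f y) := by
  have : f.comp (FreeGroup.lift ![x, y]) = FreeGroup.lift ![f x, f y] := by
    ext i
    fin_cases i <;> simp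
  exact DFunLike.congr_fun this w

theorem wordEval_lift {G : Type*} [Group G] (w u v : FreeGroup (Fin 2)) (x y : G) :
    wordEval (FreeGroup.lift ![u, v] w) x y = wordEval w (wordEval u x y) (wordEval v x y) :=
  map_wordEval (FreeGroup.lift ![x, y]) w u v

theorem reverse_ofFn {α : Type*} {r : ℕ} (f : Fin r → α) :
    (List.ofFn f).reverse = List.ofFn fun i => f i.rev := by
  refine List.ext_getElem (by simp) fun k _ _ => ?_
  simp only [List.getElem_reverse, List.getElem_ofFn, List.length_ofFn]
  congr 1
  ext
  simp only [Fin.val_rev]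
  omega

theorem inv_wordEval_wordOf {G : Type*} [Group G] {r : ℕ} (a b : Fin r → ℤ) (x y : G) :
    (wordEval (wordOf a b) x y)⁻¹ =
      wordEval (wordOf (fun i => -b i.rev) fun i => -a i.rev) y x := by
  simp [wordEval_wordOf, List.prod_inv_reverse, List.map_ofFn, reverse_ofFn, Function.comp_def]

/-- The trace of the value of the word `w` at a pair of matrices. -/
def wordTrace (w : FreeGroup (Fin 2)) (K : Type) [CommRing K] (g : SL2 K × SL2 K) : K :=
  trace (wordMap w K g : Matrix (Fin 2) (Fin 2) K)

/-- Over every field `K` there are permutations `Φ τ` of `SL2 K × SL2 K`, for `τ` in `K`, such that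
for every pair `g` with nonzero lower left entries the trace of `w` at `Φ τ g` is a polynomial of
degree `d` in `τ`. -/
def HasTraceFamily (w : FreeGroup (Fin 2)) (d : ℕ) : Prop :=
  ∀ (K : Type) [Field K], ∃ Φ : K → Equiv.Perm (SL2 K × SL2 K),
    ∀ g : SL2 K × SL2 K, g.1 1 0 ≠ 0 → g.2 1 0 ≠ 0 →
      ∃ F : K[X], F.natDegree = d ∧ ∀ τ, F.eval τ = wordTrace w K (Φ τ g)

theorem HasTraceFamily.of_perm {w w' : FreeGroup (Fin 2)} {d : ℕ} (h : HasTraceFamily w' d)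
    (H : ∀ (K : Type) [Field K], ∃ σ : Equiv.Perm (SL2 K × SL2 K),
      ∀ g, wordTrace w K (σ g) = wordTrace w' K g) : HasTraceFamily w d := by
  intro K _
  obtain ⟨Φ, hΦ⟩ := h K
  obtain ⟨σ, hσ⟩ := H K
  refine ⟨fun τ => (Φ τ).trans σ, fun g hg hg' => ?_⟩
  obtain ⟨F, hF, heval⟩ := hΦ g hg hg'
  exact ⟨F, hF, fun τ => (heval τ).trans (hσ _).symm⟩

theorem hasTraceFamily_of_shearBlock {w : FreeGroup (Fin 2)} {d : ℕ} (m m' k k' : ℕ)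
    (H : ∀ (K : Type) [Field K] (g g' : SL2 K), g 1 0 ≠ 0 → g' 1 0 ≠ 0 →
      (wordTrace w K[X] (shearBlock m m' g, shearBlock k k' g')).natDegree = d) :
    HasTraceFamily w d := by
  intro K _
  let evalAt (τ : K) : SL2 K[X] →* SL2 K := Matrix.SpecialLinearGroup.map (evalRingHom τ)
  have evalAt_const (τ : K) (g : SL2 K) : evalAt τ (constSL2 g) = g := by
    ext i j
    simp [evalAt, constSL2]
  let translate (τ : K) (m m' : ℕ) : Equiv.Perm (SL2 K) :=
    (Equiv.mulLeft (evalAt τ (shear (X ^ m)))).trans (Equiv.mulRight (evalAt τ (shear (X ^ m'))))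
  have translate_apply (τ : K) (m m' : ℕ) (g : SL2 K) :
      translate τ m m' g = evalAt τ (shearBlock m m' g) := by
    simp [translate, shearBlock, evalAt_const]
  refine ⟨fun τ => (translate τ m m').prodCongr (translate τ k k'), fun g hg hg' =>
    ⟨_, H K g.1 g.2 hg hg', fun τ => ?_⟩⟩
  simp only [wordTrace, wordMap, Equiv.prodCongr_apply, Prod.map, translate_apply,
    ← map_wordEval]
  simp [evalAt, trace_fin_two]

theorem hasTraceFamily_traceDegree {n : ℕ} {a b : Fin (n + 1) → ℤ} (ha : ∀ i, a i ≠ 0)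
    (hb : ∀ i, b i ≠ 0) {m m' k k' : ℕ} (hnd : [m, m', k, k'].Nodup) :
    HasTraceFamily (wordOf a b) (traceDegree a b m m' k k') := by
  refine hasTraceFamily_of_shearBlock m m' k k' fun K _ g g' hg hg' => ?_
  rw [wordTrace, wordMap, wordEval_wordOf]
  exact natDegree_trace_prod_shearBlock ha hb hnd hg hg'

end TraceFamilies

section DegreesModuloComplexity

variable {n : ℕ} {a b : Fin (n + 1) → ℤ}

theorem exists_traceDegree_eq_mul_add (a b : Fin (n + 1) → ℤ) {d : ℕ} (hd : d ≠ 0) :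
    ∃ S, traceDegree a b (2 * d + 1) (4 * d) 0 d = d * S + (n + 1) := by
  have hterm (i) : ((a i).natAbs - 1) * max (2 * d + 1) (4 * d) +
      max (signSelect (a i) (4 * d) (2 * d + 1)) (signSelect (b i) 0 d) +
      (((b i).natAbs - 1) * max 0 d +
        max (signSelect (b i) d 0) (signSelect (a (i + 1)) (2 * d + 1) (4 * d))) =
      d * (((a i).natAbs - 1) * 4 + ((b i).natAbs - 1)) + signSelect (a i) (4 * d) (2 * d + 1) +
        signSelect (a (i + 1)) (2 * d + 1) (4 * d) := by
    have hmax : max (2 * d + 1) (4 * d) = 4 * d := by omega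
    have hx : max (signSelect (a i) (4 * d) (2 * d + 1)) (signSelect (b i) 0 d) =
        signSelect (a i) (4 * d) (2 * d + 1) := by
      unfold signSelect; split_ifs <;> omega
    have hy : max (signSelect (b i) d 0) (signSelect (a (i + 1)) (2 * d + 1) (4 * d)) =
        signSelect (a (i + 1)) (2 * d + 1) (4 * d) := by
      unfold signSelect; split_ifs <;> omega
    rw [hmax, hx, hy, max_eq_right (Nat.zero_le d)]
    ring
  have hpair (c : ℤ) :
      signSelect c (4 * d) (2 * d + 1) + signSelect c (2 * d + 1) (4 * d) = d * 6 + 1 := by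
    unfold signSelect; split_ifs <;> omega
  have hshift := Equiv.sum_comp (Equiv.addRight (1 : Fin (n + 1)))
    fun i => signSelect (a i) (2 * d + 1) (4 * d)
  simp only [Equiv.coe_addRight] at hshift
  refine ⟨∑ i, (((a i).natAbs - 1) * 4 + ((b i).natAbs - 1) + 6), ?_⟩
  simp_rw [traceDegree, hterm]
  rw [Finset.sum_add_distrib, hshift, ← Finset.sum_add_distrib]
  simp_rw [add_assoc, hpair, ← add_assoc, ← mul_add]
  rw [Finset.sum_add_distrib, ← Finset.mul_sum, Fin.sum_const, smul_eq_mul, mul_one, add_assoc]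

theorem exists_hasTraceFamily_coprime (hr : (n + 1).Prime) (ha : ∀ i, a i ≠ 0)
    (hb : ∀ i, b i ≠ 0) {d : ℕ} (hd : ¬(n + 1) ∣ d) :
    ∃ e, e ≠ 0 ∧ HasTraceFamily (wordOf a b) e ∧ e.Coprime d := by
  have hd0 : d ≠ 0 := by rintro rfl; simp at hd
  obtain ⟨S, hS⟩ := exists_traceDegree_eq_mul_add a b hd0
  have hnd : [2 * d + 1, 4 * d, 0, d].Nodup := by
    simp only [List.nodup_cons, List.mem_cons, List.not_mem_nil, or_false, not_or,
      not_false_eq_true, List.nodup_nil, and_true]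
    omega
  refine ⟨d * S + (n + 1), by omega, hS ▸ hasTraceFamily_traceDegree ha hb hnd, ?_⟩
  rw [Nat.coprime_mul_left_add_left]
  exact hr.coprime_iff_not_dvd.2 hd

theorem natCast_succ_eq_zero (n : ℕ) : (n : ZMod (n + 1)) + 1 = 0 := by
  exact_mod_cast ZMod.natCast_self (n + 1)

theorem natCast_traceDegree (ha : ∀ i, a i ≠ 0) (hb : ∀ i, b i ≠ 0) :
    (traceDegree a b 0 (2 * (n + 1)) (n + 1) 1 : ZMod (n + 1)) =
      (Finset.univ.filter fun i => a i < 0 ∧ b i < 0 ∨ 0 < b i ∧ 0 < a (i + 1)).card := by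
  have hmax : max (2 * (n + 1)) 1 = 2 * (n + 1) := by omega
  have hmax' : max 1 (2 * (n + 1)) = 2 * (n + 1) := by omega
  rw [traceDegree, ← Finset.sum_boole, Nat.cast_sum]
  refine Finset.sum_congr rfl fun i _ => ?_
  rcases lt_or_gt_of_ne (ha i) with hai | hai <;> rcases lt_or_gt_of_ne (hb i) with hbi | hbi <;>
    rcases lt_or_gt_of_ne (ha (i + 1)) with hai' | hai' <;>
    simp [signSelect, hai, hbi, hai', hai.not_gt, hbi.not_gt, hai'.not_gt, hmax, hmax']

theorem forall_or_forall_not_of_card_dvd {ι : Type*} [Fintype ι] {Q : ι → Prop} [DecidablePred Q]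
    (h : Fintype.card ι ∣ (Finset.univ.filter Q).card) : (∀ i, Q i) ∨ ∀ i, ¬Q i := by
  rcases Nat.eq_zero_or_pos (Finset.univ.filter Q).card with h0 | h0
  · exact .inr fun i => Finset.filter_eq_empty_iff.1 (Finset.card_eq_zero.1 h0) (Finset.mem_univ i)
  · have := Finset.eq_univ_of_card _ (le_antisymm (Finset.card_le_univ _) (Nat.le_of_dvd h0 h))
    exact .inl fun i => (Finset.filter_eq_self.1 this) i (Finset.mem_univ i)

theorem forall_of_forall_imp_add_one {P : Fin (n + 1) → Prop} (h : ∀ i, P i → P (i + 1))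
    {i : Fin (n + 1)} (hi : P i) (j : Fin (n + 1)) : P j := by
  have hadd (k : ℕ) : P (i + Fin.ofNat (n + 1) k) := by
    induction k with
    | zero => simpa using hi
    | succ k ih =>
      convert h _ ih using 1
      ext
      simp [Fin.val_add, add_assoc]
  simpa using hadd (j - i).val

theorem forall_sign_of_forall_turn (ha : ∀ i, a i ≠ 0) (hb : ∀ i, b i ≠ 0)
    (h : (∀ i, a i < 0 ∧ b i < 0 ∨ 0 < b i ∧ 0 < a (i + 1)) ∨
      ∀ i, ¬(a i < 0 ∧ b i < 0 ∨ 0 < b i ∧ 0 < a (i + 1))) :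
    ((∀ i, 0 < a i) ∨ ∀ i, a i < 0) ∧ ((∀ i, 0 < b i) ∨ ∀ i, b i < 0) := by
  have hstep (i) (hi : 0 < b i) : 0 < b (i + 1) := by
    have := hb (i + 1)
    have := ha (i + 1)
    rcases h with h | h <;> have := h i <;> have := h (i + 1) <;> omega
  by_cases hpos : ∃ i, 0 < b i
  · obtain ⟨i₀, hi₀⟩ := hpos
    have hbpos := forall_of_forall_imp_add_one hstep hi₀
    refine ⟨h.imp (fun h i => ?_) fun h i => ?_, .inl hbpos⟩ <;>
    · have := h (i - 1)
      have := hbpos (i - 1)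
      have := ha i
      rw [sub_add_cancel] at *
      omega
  · have hbneg (i) : b i < 0 := (not_lt.1 fun hi => hpos ⟨i, hi⟩).lt_of_ne (hb i)
    refine ⟨h.symm.imp (fun h i => ?_) fun h i => ?_, .inr hbneg⟩ <;>
    · have := h i
      have := hbneg i
      have := ha i
      omega

theorem exists_hasTraceFamily_of_mixed_signs (hr : (n + 1).Prime) (ha : ∀ i, a i ≠ 0)
    (hb : ∀ i, b i ≠ 0)
    (hs : ¬(((∀ i, 0 < a i) ∨ ∀ i, a i < 0) ∧ ((∀ i, 0 < b i) ∨ ∀ i, b i < 0))) :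
    ∃ d, HasTraceFamily (wordOf a b) d ∧ ¬(n + 1) ∣ d := by
  have hn : n ≠ 0 := by rintro rfl; exact absurd hr (by norm_num)
  have hnd : [0, 2 * (n + 1), n + 1, 1].Nodup := by
    simp only [List.nodup_cons, List.mem_cons, List.not_mem_nil, or_false, not_or,
      not_false_eq_true, List.nodup_nil, and_true]
    omega
  refine ⟨_, hasTraceFamily_traceDegree ha hb hnd,
    fun hdvd => hs (forall_sign_of_forall_turn ha hb ?_)⟩
  rw [← ZMod.natCast_eq_zero_iff, natCast_traceDegree ha hb, ZMod.natCast_eq_zero_iff] at hdvd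
  exact forall_or_forall_not_of_card_dvd (by simpa using hdvd)

end DegreesModuloComplexity

section LinkBlocks

theorem LeadsLowerRight.mul_pow {K : Type} [CommRing K] [IsDomain K] {M N : SL2 K[X]} {D E : ℕ}
    (hM : LeadsLowerRight (M : Matrix (Fin 2) (Fin 2) K[X]) D)
    (hN : LeadsLowerRight (N : Matrix (Fin 2) (Fin 2) K[X]) E) (m : ℕ) :
    LeadsLowerRight ((M * N ^ m : SL2 K[X]) : Matrix (Fin 2) (Fin 2) K[X]) (D + m * E) := by
  induction m with
  | zero => simpa using hM
  | succ m ih =>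
    rw [pow_succ, ← mul_assoc, Matrix.SpecialLinearGroup.coe_mul, Nat.succ_mul, ← add_assoc]
    exact ih.mul hN

/-- The degree of the trace of `linkBlock n g g' c`. -/
def linkDegree (n : ℕ) (c : ℤ) : ℕ :=
  if c = 0 then 3 * n + 2 else n + 2 + (c.natAbs - 1) * (n + 1) + (3 * n + 2)

/-- The product of `g'` with the power `x ^ c` of `x = shearBlock 0 (n + 1) g`, which lies between
shears whose degrees are so large that no leading term cancels, even for `c = 0`. -/
noncomputable def linkBlock {R : Type} [CommRing R] (n : ℕ) (g g' : SL2 R) (c : ℤ) : SL2 R[X] :=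
  constSL2 g' * (shear (X ^ (n + 2)) * shearBlock 0 (n + 1) g ^ c * shear (X ^ (3 * n + 2)))

theorem natCast_linkDegree (n : ℕ) (c : ℤ) :
    (linkDegree n c : ZMod (n + 1)) = if c = 0 then -1 else 0 := by
  unfold linkDegree
  split_ifs <;> push_cast
  · linear_combination 3 * natCast_succ_eq_zero n
  · linear_combination (4 + ((c.natAbs - 1 : ℕ) : ZMod (n + 1))) * natCast_succ_eq_zero n

variable {K : Type} [CommRing K] [IsDomain K] {n : ℕ}

theorem leadsLowerRight_linkBlock (hn : n ≠ 0) {g g' : SL2 K} (hg : g 1 0 ≠ 0) (hg' : g' 1 0 ≠ 0)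
    (c : ℤ) :
    LeadsLowerRight (linkBlock n g g' c : Matrix (Fin 2) (Fin 2) K[X]) (linkDegree n c) := by
  suffices h : LeadsUpperRight ((shear (X ^ (n + 2)) * shearBlock 0 (n + 1) g ^ c *
      shear (X ^ (3 * n + 2)) : SL2 K[X]) : Matrix (Fin 2) (Fin 2) K[X]) (linkDegree n c) by
    rw [linkBlock, Matrix.SpecialLinearGroup.coe_mul, ← zero_add (linkDegree n c)]
    exact (leadsLowerLeft_constSL2 hg').mul_leadsUpperRight h
  unfold linkDegree
  split_ifs with hc
  · have hdeg : (X ^ (n + 2) + X ^ (3 * n + 2) : K[X]).natDegree = 3 * n + 2 := by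
      rw [natDegree_add_eq_max] <;> simp only [natDegree_X_pow] <;> omega
    have := leadsUpperRight_shear (hdeg.trans_ne (by omega))
    rwa [hdeg, shear_add, ← mul_one (shear (X ^ (n + 2))), ← zpow_zero, ← hc] at this
  · obtain ⟨L, R, N, hL, hR, hN, hpow⟩ :=
      exists_zpow_shearBlock_eq (m := 0) (m' := n + 1) (by omega) hg hc
    have hLlt : L.natDegree < n + 2 := by rw [hL, signSelect]; split_ifs <;> omega
    have hRlt : R.natDegree < 3 * n + 2 := by rw [hR, signSelect]; split_ifs <;> omega
    have hLdeg : (X ^ (n + 2) + L).natDegree = n + 2 := by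
      rw [natDegree_add_eq_left_of_natDegree_lt] <;> simp [hLlt]
    have hRdeg : (R + X ^ (3 * n + 2)).natDegree = 3 * n + 2 := by
      rw [natDegree_add_eq_right_of_natDegree_lt] <;> simp [hRlt]
    have hassoc : shear (X ^ (n + 2)) * shearBlock 0 (n + 1) g ^ c * shear (X ^ (3 * n + 2)) =
        shear (X ^ (n + 2) + L) * N * shear (R + X ^ (3 * n + 2)) := by
      simp only [hpow, shear_add, mul_assoc]
    rw [hassoc, Matrix.SpecialLinearGroup.coe_mul, Matrix.SpecialLinearGroup.coe_mul]
    rw [max_eq_right (Nat.zero_le _)] at hN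
    have := hN.sandwich (leadsUpperRight_shear (hLdeg.trans_ne (by omega)))
      (leadsUpperRight_shear (hRdeg.trans_ne (by omega)))
    rwa [hLdeg, hRdeg] at this

theorem mul_mul_pow_succ_mul_inv {G : Type*} [Group G] (U V T : G) (m : ℕ) :
    U * (T * (V * U) ^ (m + 1)) * U⁻¹ = U * T * V * (U * V) ^ m := by
  have hconj : (V * U) ^ (m + 1) * U⁻¹ = V * (U * V) ^ m := by
    rw [pow_succ, ← mul_assoc, mul_inv_cancel_right, mul_pow_mul]
  simp only [mul_assoc, hconj]

theorem natDegree_trace_prod_linkBlock (hn : n ≠ 0) {g g' : SL2 K} (hg : g 1 0 ≠ 0)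
    (hg' : g' 1 0 ≠ 0) (a : Fin (n + 1) → ℤ) {b : Fin (n + 1) → ℤ} (hb : ∀ i, 0 < b i) (s : ℤ) :
    (trace ((List.ofFn fun i => shearBlock 0 (n + 1) g ^ a i *
      (shearBlock (3 * n + 2) (n + 2) g' * shearBlock 0 (n + 1) g ^ (-s)) ^ b i).prod :
        Matrix (Fin 2) (Fin 2) K[X])).natDegree =
      ∑ i, (linkDegree n (a i - s) + ((b i).natAbs - 1) * linkDegree n (-s)) := by
  set x := shearBlock 0 (n + 1) g
  set V : SL2 K[X] := shear (X ^ (3 * n + 2))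
  set U : SL2 K[X] := constSL2 g' * shear (X ^ (n + 2)) * x ^ (-s)
  have hVU : shearBlock (3 * n + 2) (n + 2) g' * x ^ (-s) = V * U := by
    simp only [shearBlock, U, V, mul_assoc]
  have hlink (c : ℤ) : U * x ^ c * V = linkBlock n g g' (c - s) := by
    rw [linkBlock, sub_eq_neg_add, _root_.zpow_add]
    simp only [U, V, x, mul_assoc]
  have hconj (i) : U * (x ^ a i * (V * U) ^ b i) * U⁻¹ =
      linkBlock n g g' (a i - s) * linkBlock n g g' (-s) ^ ((b i).natAbs - 1) := by
    obtain ⟨m, hm⟩ : ∃ m : ℕ, b i = (m + 1 : ℕ) := ⟨(b i).natAbs - 1, by have := hb i; omega⟩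
    rw [hm, zpow_natCast, mul_mul_pow_succ_mul_inv, hlink, Int.natAbs_natCast,
      Nat.add_sub_cancel, ← zero_sub s, ← hlink 0, zpow_zero, mul_one]
  rw [hVU, ← trace_conj U, ← prod_ofFn_cyclic_telescope fun _ => U]
  refine (leadsLowerRight_prod_ofFn fun i => ?_).natDegree_trace
  rw [hconj]
  exact (leadsLowerRight_linkBlock hn hg hg' _).mul_pow (leadsLowerRight_linkBlock hn hg hg' _) _

end LinkBlocks

section CoprimeTraceFamilies

variable {n : ℕ} {a b : Fin (n + 1) → ℤ}

theorem trace_inv {R : Type} [CommRing R] (g : SL2 R) :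
    trace ((g⁻¹ : SL2 R) : Matrix (Fin 2) (Fin 2) R) = trace (g : Matrix (Fin 2) (Fin 2) R) := by
  rw [trace_fin_two, trace_fin_two, Matrix.SpecialLinearGroup.SL2_inv_expl]
  exact add_comm _ _

theorem hasTraceFamily_linkDegree (hn : n ≠ 0) (a : Fin (n + 1) → ℤ) (hb : ∀ i, 0 < b i) (s : ℤ) :
    HasTraceFamily (wordOf a b)
      (∑ i, (linkDegree n (a i - s) + ((b i).natAbs - 1) * linkDegree n (-s))) := by
  let x : FreeGroup (Fin 2) := FreeGroup.of 0
  let y : FreeGroup (Fin 2) := FreeGroup.of 1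
  have heval {G : Type} [Group G] (g g' : G) :
      wordEval (FreeGroup.lift ![x, y * x ^ (-s)] (wordOf a b)) g g' =
        wordEval (wordOf a b) g (g' * g ^ (-s)) := by
    rw [wordEval_lift]
    simp [wordEval, x, y]
  refine HasTraceFamily.of_perm (w' := FreeGroup.lift ![x, y * x ^ (-s)] (wordOf a b)) ?_
    fun K _ => ⟨Equiv.prodShear (Equiv.refl _) fun g => Equiv.mulRight (g ^ (-s)), fun g => ?_⟩
  · refine hasTraceFamily_of_shearBlock 0 (n + 1) (3 * n + 2) (n + 2) fun K _ g g' hg hg' => ?_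
    rw [wordTrace, wordMap, heval, wordEval_wordOf]
    exact natDegree_trace_prod_linkBlock hn hg hg' a hb s
  · rw [wordTrace, wordTrace, wordMap, wordMap, heval]
    rfl

theorem natCast_sum_linkDegree (a : Fin (n + 1) → ℤ) (β : Fin (n + 1) → ℕ) {s : ℤ} (hs : s ≠ 0) :
    ((∑ i, (linkDegree n (a i - s) + β i * linkDegree n (-s)) : ℕ) : ZMod (n + 1)) =
      -(Finset.univ.filter fun i => a i = s).card := by
  rw [← Finset.sum_boole, ← Finset.sum_neg_distrib, Nat.cast_sum]
  refine Finset.sum_congr rfl fun i _ => ?_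
  simp only [Nat.cast_add, natCast_linkDegree, sub_eq_zero, Nat.cast_mul, neg_eq_zero, hs,
    ↓reduceIte, mul_zero, add_zero]
  split_ifs <;> simp

theorem exists_hasTraceFamily_of_pos (hn : n ≠ 0) (ha : ∀ i, a i ≠ 0) (hb : ∀ i, 0 < b i)
    (hne : ¬∀ i, a i = a 0) : ∃ d, HasTraceFamily (wordOf a b) d ∧ ¬(n + 1) ∣ d := by
  refine ⟨_, hasTraceFamily_linkDegree hn a hb (a 0), fun hdvd => ?_⟩
  rw [← ZMod.natCast_eq_zero_iff, natCast_sum_linkDegree a _ (ha 0), neg_eq_zero,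
    ZMod.natCast_eq_zero_iff] at hdvd
  rcases forall_or_forall_not_of_card_dvd (Q := fun i => a i = a 0) (by simpa using hdvd)
    with h | h
  · exact hne h
  · exact h 0 rfl

theorem exists_hasTraceFamily_of_left_not_const (hn : n ≠ 0) (ha : ∀ i, a i ≠ 0)
    (hb : (∀ i, 0 < b i) ∨ ∀ i, b i < 0) (hne : ¬∀ i, a i = a 0) :
    ∃ d, HasTraceFamily (wordOf a b) d ∧ ¬(n + 1) ∣ d := by
  rcases hb with hb | hb
  · exact exists_hasTraceFamily_of_pos hn ha hb hne
  · obtain ⟨d, hfam, hd⟩ :=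
      exists_hasTraceFamily_of_pos (b := fun i => -b i) hn ha (fun i => neg_pos.2 (hb i)) hne
    refine ⟨d, hfam.of_perm fun K _ => ⟨(Equiv.refl _).prodCongr (Equiv.inv _), fun g => ?_⟩, hd⟩
    simp [wordTrace, wordMap, wordEval_wordOf]

theorem exists_hasTraceFamily_of_right_not_const (hn : n ≠ 0) (hb : ∀ i, b i ≠ 0)
    (ha : (∀ i, 0 < a i) ∨ ∀ i, a i < 0) (hne : ¬∀ i, b i = b 0) :
    ∃ d, HasTraceFamily (wordOf a b) d ∧ ¬(n + 1) ∣ d := by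
  have hne' : ¬∀ i : Fin (n + 1), -b i.rev = -b (0 : Fin (n + 1)).rev := fun h => hne fun i => by
    have hi := h i.rev
    have h0 := h (0 : Fin (n + 1)).rev
    simp only [Fin.rev_rev, neg_inj] at hi h0
    rw [hi, h0]
  obtain ⟨d, hfam, hd⟩ := exists_hasTraceFamily_of_left_not_const (a := fun i => -b i.rev)
    (b := fun i => -a i.rev) hn (fun i => neg_ne_zero.2 (hb _))
    (ha.symm.imp (fun h i => neg_pos.2 (h _)) fun h i => neg_neg_iff_pos.2 (h _)) hne'
  refine ⟨d, hfam.of_perm fun K _ => ⟨Equiv.prodComm _ _, fun g => ?_⟩, hd⟩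
  rw [wordTrace, wordTrace, wordMap, wordMap, ← trace_inv, inv_wordEval_wordOf]
  rfl

theorem exists_coprime_hasTraceFamily (hr : (n + 1).Prime) (ha : ∀ i, a i ≠ 0)
    (hb : ∀ i, b i ≠ 0) (hne : ¬((∀ i, a i = a 0) ∧ ∀ i, b i = b 0)) :
    ∃ d e, d ≠ 0 ∧ e ≠ 0 ∧ d.Coprime e ∧
      HasTraceFamily (wordOf a b) d ∧ HasTraceFamily (wordOf a b) e := by
  have hn : n ≠ 0 := by rintro rfl; exact absurd hr (by norm_num)
  obtain ⟨d, hfam, hd⟩ : ∃ d, HasTraceFamily (wordOf a b) d ∧ ¬(n + 1) ∣ d := by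
    by_cases h : ((∀ i, 0 < a i) ∨ ∀ i, a i < 0) ∧ ((∀ i, 0 < b i) ∨ ∀ i, b i < 0)
    · rcases not_and_or.1 hne with hne | hne
      · exact exists_hasTraceFamily_of_left_not_const hn ha h.2 hne
      · exact exists_hasTraceFamily_of_right_not_const hn hb h.1 hne
    · exact exists_hasTraceFamily_of_mixed_signs hr ha hb h
  obtain ⟨e, he, hfam', hcop⟩ := exists_hasTraceFamily_coprime hr ha hb hd
  exact ⟨e, d, he, by rintro rfl; simp at hd, hcop, hfam', hfam⟩

theorem wordOf_const (r : ℕ) (α β : ℤ) :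
    wordOf (fun _ : Fin r => α) (fun _ => β) =
      (FreeGroup.of (0 : Fin 2) ^ α * FreeGroup.of (1 : Fin 2) ^ β) ^ r := by
  rw [wordOf, List.ofFn_const, List.prod_replicate]

end CoprimeTraceFamilies

section Moments

open scoped Finset

variable {Ω T K : Type*} [Fintype Ω] [Fintype T]

theorem sum_card_filter_comm (P : T → Ω → Prop) [∀ t x, Decidable (P t x)] :
    ∑ x, #{t | P t x} = ∑ t, #{x | P t x} := by
  simp_rw [Finset.card_filter]
  exact Finset.sum_comm

theorem card_filter_comp_perm (σ : Equiv.Perm Ω) (P : Ω → Prop) [DecidablePred P] :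
    #{x | P (σ x)} = #{x | P x} :=
  Finset.card_equiv σ (by simp)

theorem card_mul_card_filter_le (Θ : T → Equiv.Perm Ω) (P : Ω → Prop) [DecidablePred P]
    (E : Finset Ω) {A : ℕ} (hA : ∀ x ∉ E, #{t | P (Θ t x)} ≤ A) :
    Fintype.card T * #{x | P x} ≤ Fintype.card Ω * A + ∑ x ∈ E, #{t | P (Θ t x)} := by
  classical
  calc Fintype.card T * #{x | P x} = ∑ x, #{t | P (Θ t x)} := by
        simp [sum_card_filter_comm, card_filter_comp_perm]
    _ = ∑ x ∈ Eᶜ, #{t | P (Θ t x)} + ∑ x ∈ E, #{t | P (Θ t x)} :=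
        (Finset.sum_compl_add_sum E _).symm
    _ ≤ #Eᶜ * A + ∑ x ∈ E, #{t | P (Θ t x)} := by
        gcongr
        exact Finset.sum_le_card_nsmul _ _ _ fun x hx => hA x (by simpa using hx)
    _ ≤ _ := by gcongr; exact Finset.card_le_univ _

variable [DecidableEq K]

theorem card_mul_card_fiber_le (φ : Ω → K) (Ψ : T → Equiv.Perm Ω) (E : Finset Ω) (c : K) {e : ℕ}
    (he : ∀ g ∉ E, #{τ | φ (Ψ τ g) = c} ≤ e) :
    Fintype.card T * #{g | φ g = c} ≤ Fintype.card Ω * e + #E * Fintype.card T := by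
  refine (card_mul_card_filter_le Ψ (fun g => φ g = c) E he).trans ?_
  gcongr
  exact Finset.sum_le_card_nsmul _ _ _ fun g _ => Finset.card_le_univ _

theorem card_filter_eq_eq_sum_card_fiber_sq [Fintype K] (φ : Ω → K) :
    #{x : Ω × Ω | φ x.1 = φ x.2} = ∑ c, #{g | φ g = c} ^ 2 := by
  rw [Finset.card_eq_sum_card_fiberwise (f := fun x => φ x.1) (t := Finset.univ) (by simp)]
  refine Finset.sum_congr rfl fun c _ => ?_
  rw [sq, ← Finset.card_product, Finset.filter_filter]
  congr 1
  ext x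
  simp only [Finset.mem_filter, Finset.mem_univ, Finset.mem_product, true_and]
  grind

theorem sum_card_fiber_comp_perm_le [Nonempty T] (φ : Ω → K) (Ψ : T × T → Equiv.Perm Ω)
    (c : T × T → K) {R : ℕ} (hR : ∀ c, Fintype.card T * #{g | φ g = c} ≤ R) :
    ∑ g, #{t | φ (Ψ t g) = c t} ≤ Fintype.card T * R := by
  refine Nat.le_of_mul_le_mul_left ?_ (Fintype.card_pos (α := T))
  calc Fintype.card T * ∑ g, #{t | φ (Ψ t g) = c t}
      = ∑ t, Fintype.card T * #{g | φ g = c t} := by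
        rw [sum_card_filter_comm, Finset.mul_sum]
        exact Finset.sum_congr rfl fun t _ =>
          congrArg _ (card_filter_comp_perm (Ψ t) fun g => φ g = c t)
    _ ≤ ∑ _t : T × T, R := Finset.sum_le_sum fun t _ => hR _
    _ = Fintype.card T * (Fintype.card T * R) := by simp [mul_assoc]

theorem card_sq_mul_sum_card_fiber_sq_le [Nonempty T] [Fintype K] (φ : Ω → K)
    (Φ Ψ : T → Equiv.Perm Ω) (E : Finset Ω) {A R : ℕ}
    (hR : ∀ c, Fintype.card T * #{g | φ g = c} ≤ R)
    (hA : ∀ g ∉ E, ∀ g' ∉ E, #{t : T × T | φ (Φ t.1 g) = φ (Ψ t.2 g')} ≤ A) :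
    Fintype.card T ^ 2 * ∑ c, #{g | φ g = c} ^ 2 ≤
      Fintype.card Ω ^ 2 * A + 2 * #E * (Fintype.card T * R) := by
  classical
  set hits : Ω × Ω → ℕ := fun x => #{t : T × T | φ (Φ t.1 x.1) = φ (Ψ t.2 x.2)} with hhits
  have hrow (g) : ∑ g', hits (g, g') ≤ Fintype.card T * R := by
    simp only [hhits, eq_comm (a := φ (Φ _ g))]
    exact sum_card_fiber_comp_perm_le φ (fun t => Ψ t.2) (fun t => φ (Φ t.1 g)) hR
  have hcol (g') : ∑ g, hits (g, g') ≤ Fintype.card T * R :=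
    sum_card_fiber_comp_perm_le φ (fun t => Φ t.1) (fun t => φ (Ψ t.2 g')) hR
  have hexc : ∑ x ∈ E ×ˢ Finset.univ ∪ Finset.univ ×ˢ E, hits x ≤
      2 * #E * (Fintype.card T * R) := by
    calc ∑ x ∈ E ×ˢ Finset.univ ∪ Finset.univ ×ˢ E, hits x
        ≤ ∑ x ∈ E ×ˢ Finset.univ, hits x + ∑ x ∈ Finset.univ ×ˢ E, hits x :=
          Nat.le_of_add_right_le (Finset.sum_union_inter).le
      _ ≤ #E * (Fintype.card T * R) + #E * (Fintype.card T * R) := by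
          rw [Finset.sum_product, Finset.sum_product_right]
          exact add_le_add (Finset.sum_le_card_nsmul _ _ _ fun g _ => hrow g)
            (Finset.sum_le_card_nsmul _ _ _ fun g' _ => hcol g')
      _ = _ := by ring
  have hgood (x) (hx : x ∉ E ×ˢ Finset.univ ∪ Finset.univ ×ˢ E) : hits x ≤ A := by
    simp only [Finset.mem_union, Finset.mem_product, Finset.mem_univ, and_true, true_and,
      not_or] at hx
    exact hA x.1 hx.1 x.2 hx.2
  have hcount := card_mul_card_filter_le (fun t : T × T => (Φ t.1).prodCongr (Ψ t.2))
    (fun x => φ x.1 = φ x.2) (E ×ˢ Finset.univ ∪ Finset.univ ×ˢ E) hgood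
  rw [card_filter_eq_eq_sum_card_fiber_sq, Fintype.card_prod, Fintype.card_prod, ← sq,
    ← sq] at hcount
  exact hcount.trans (Nat.add_le_add_left hexc _)

end Moments

section TraceClasses

open scoped Finset

theorem sl2_ext {R : Type} [CommRing R] {y z : SL2 R} (h₀₀ : y 0 0 = z 0 0) (h₀₁ : y 0 1 = z 0 1)
    (h₁₀ : y 1 0 = z 1 0) (h₁₁ : y 1 1 = z 1 1) : y = z := by
  ext i j
  fin_cases i <;> fin_cases j <;> assumption

theorem sl2_det {R : Type} [CommRing R] (y : SL2 R) : y 0 0 * y 1 1 - y 0 1 * y 1 0 = 1 := by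
  rw [← Matrix.det_fin_two, y.det_coe]

theorem lowerRight_of_trace_eq {R : Type} [CommRing R] {y : SL2 R} {c : R} (hy : trace y.1 = c) :
    y 1 1 = c - y 0 0 := by
  rw [← hy, trace_fin_two]
  exact (add_sub_cancel_left _ _).symm

variable {K : Type} [Field K] [Fintype K] [DecidableEq K]

theorem card_trace_eq_and_upperRight_ne_zero (c : K) :
    #{y : SL2 K | trace y.1 = c ∧ y 0 1 ≠ 0} = Fintype.card K * (Fintype.card K - 1) := by
  rw [← Finset.card_univ (α := K), ← Finset.card_erase_of_mem (Finset.mem_univ 0),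
    ← Finset.card_product]
  refine Finset.card_bij (fun y _ => (y 0 0, y 0 1)) (by simp) ?_ ?_
  · simp only [Finset.mem_filter, Finset.mem_univ, true_and, Prod.mk.injEq]
    rintro y ⟨hy, hy₀⟩ z ⟨hz, -⟩ ⟨h₀₀, h₀₁⟩
    have h₁₁ : y 1 1 = z 1 1 := by
      rw [lowerRight_of_trace_eq hy, lowerRight_of_trace_eq hz, h₀₀]
    refine sl2_ext h₀₀ h₀₁ (mul_left_cancel₀ hy₀ ?_) h₁₁
    linear_combination y 1 1 * h₀₀ + z 0 0 * h₁₁ - z 1 0 * h₀₁ + sl2_det z - sl2_det y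
  · simp only [Finset.mem_product, Finset.mem_univ, Finset.mem_erase, true_and, and_true]
    rintro ⟨u, v⟩ hv
    have hdet : (!![u, v; (u * (c - u) - 1) / v, c - u] : Matrix (Fin 2) (Fin 2) K).det = 1 := by
      rw [det_fin_two_of, mul_div_cancel₀ _ hv, sub_sub_cancel]
    exact ⟨⟨_, hdet⟩, Finset.mem_filter.2 ⟨Finset.mem_univ _, by simp [trace_fin_two_of], hv⟩, rfl⟩

theorem card_trace_eq_and_upperRight_eq_zero_le (c : K) :
    #{y : SL2 K | trace y.1 = c ∧ y 0 1 = 0} ≤ 2 * Fintype.card K := by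
  have hdeg : (X ^ 2 - C c * X + C 1 : K[X]).natDegree = 2 := by compute_degree!
  have hne : (X ^ 2 - C c * X + C 1 : K[X]) ≠ 0 := ne_zero_of_natDegree_gt (n := 1) (by omega)
  calc #{y : SL2 K | trace y.1 = c ∧ y 0 1 = 0}
      ≤ #((X ^ 2 - C c * X + C 1 : K[X]).roots.toFinset ×ˢ (Finset.univ : Finset K)) := by
        refine Finset.card_le_card_of_injOn (fun y => (y 0 0, y 1 0)) ?_ ?_
        · intro y hy
          obtain ⟨hc, h₀⟩ : trace y.1 = c ∧ y 0 1 = 0 := by simpa using hy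
          have hroot := sl2_det y
          rw [lowerRight_of_trace_eq hc, h₀] at hroot
          simp only [Finset.coe_product, Set.mem_prod, Finset.mem_coe, Multiset.mem_toFinset,
            Finset.mem_univ, and_true, mem_roots hne, IsRoot.def, eval_add, eval_sub, eval_pow,
            eval_mul, eval_X, eval_C]
          linear_combination -hroot
        · intro y hy z hz h
          obtain ⟨hyc, hy₀⟩ : trace y.1 = c ∧ y 0 1 = 0 := by simpa using hy
          obtain ⟨hzc, hz₀⟩ : trace z.1 = c ∧ z 0 1 = 0 := by simpa using hz
          obtain ⟨h₀₀, h₁₀⟩ := Prod.ext_iff.1 h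
          refine sl2_ext h₀₀ (hy₀.trans hz₀.symm) h₁₀ ?_
          rw [lowerRight_of_trace_eq hyc, lowerRight_of_trace_eq hzc]
          exact congrArg _ h₀₀
    _ ≤ 2 * Fintype.card K := by
        rw [Finset.card_product, Finset.card_univ]
        gcongr
        exact ((Multiset.toFinset_card_le _).trans (card_roots' _)).trans hdeg.le

theorem card_trace_eq_eq_add (c : K) :
    #{y : SL2 K | trace y.1 = c} =
      #{y : SL2 K | trace y.1 = c ∧ y 0 1 = 0} + #{y : SL2 K | trace y.1 = c ∧ y 0 1 ≠ 0} := by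
  rw [← Finset.card_filter_add_card_filter_not (s := {y : SL2 K | trace y.1 = c})
    fun y => y 0 1 = 0, Finset.filter_filter, Finset.filter_filter]

theorem card_trace_eq_le (c : K) :
    #{y : SL2 K | trace y.1 = c} ≤ Fintype.card K ^ 2 + Fintype.card K := by
  have hle := card_trace_eq_and_upperRight_eq_zero_le c
  have hq := Nat.le_mul_self (Fintype.card K)
  rw [card_trace_eq_eq_add, card_trace_eq_and_upperRight_ne_zero, Nat.mul_sub_one, sq]
  omega

theorem sq_card_le_card_trace_eq_add (c : K) :
    Fintype.card K ^ 2 ≤ #{y : SL2 K | trace y.1 = c} + Fintype.card K := by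
  have hq := Nat.le_mul_self (Fintype.card K)
  rw [card_trace_eq_eq_add, card_trace_eq_and_upperRight_ne_zero, Nat.mul_sub_one, sq]
  omega

theorem card_trace_mem_le (D : Finset K) :
    #{y : SL2 K | trace y.1 ∈ D} ≤ #D * (Fintype.card K ^ 2 + Fintype.card K) := by
  rw [mul_comm]
  refine Finset.card_le_mul_card_image_of_maps_to (f := fun y : SL2 K => trace y.1) (by simp) _
    fun c _ => le_trans (Finset.card_le_card ?_) (card_trace_eq_le c)
  exact Finset.filter_subset_filter _ (Finset.subset_univ _)

theorem card_sl2_le : Fintype.card (SL2 K) ≤ Fintype.card K ^ 3 + Fintype.card K ^ 2 := by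
  calc Fintype.card (SL2 K) = #{y : SL2 K | trace y.1 ∈ (Finset.univ : Finset K)} := by simp
    _ ≤ Fintype.card K * (Fintype.card K ^ 2 + Fintype.card K) := card_trace_mem_le _
    _ = _ := by ring

theorem card_cube_le_card_sl2_add :
    Fintype.card K ^ 3 ≤ Fintype.card (SL2 K) + Fintype.card K ^ 2 := by
  calc Fintype.card K ^ 3 = ∑ _c : K, Fintype.card K ^ 2 := by
        rw [Finset.sum_const, Finset.card_univ, smul_eq_mul, ← pow_succ']
    _ ≤ ∑ c : K, (#{y : SL2 K | trace y.1 = c} + Fintype.card K) :=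
        Finset.sum_le_sum fun c _ => sq_card_le_card_trace_eq_add c
    _ = Fintype.card (SL2 K) + Fintype.card K ^ 2 := by
        rw [Finset.sum_add_distrib, ← Finset.card_eq_sum_card_fiberwise (s := Finset.univ)
          (by simp)]
        simp [sq]

theorem card_lowerLeft_eq_zero_le : #{g : SL2 K | g 1 0 = 0} ≤ Fintype.card K ^ 2 := by
  rw [sq, ← Fintype.card_prod]
  refine Finset.card_le_card_of_injOn (fun y => (y 0 0, y 0 1)) (by simp) fun y hy z hz h => ?_
  obtain ⟨h₀₀, h₀₁⟩ : y 0 0 = z 0 0 ∧ y 0 1 = z 0 1 := by simpa using h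
  have hy₀ : y 1 0 = 0 := by simpa using hy
  have hz₀ : z 1 0 = 0 := by simpa using hz
  have hydet := sl2_det y
  have hzdet := sl2_det z
  rw [hy₀, mul_zero, sub_zero] at hydet
  rw [hz₀, mul_zero, sub_zero] at hzdet
  refine sl2_ext h₀₀ h₀₁ (hy₀.trans hz₀.symm)
    (mul_left_cancel₀ (left_ne_zero_of_mul_eq_one hzdet) ?_)
  rw [hzdet, ← h₀₀, hydet]

theorem card_lowerLeft_eq_zero_or_le :
    #{g : SL2 K × SL2 K | g.1 1 0 = 0 ∨ g.2 1 0 = 0} ≤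
      2 * (Fintype.card K ^ 2 * Fintype.card (SL2 K)) := by
  have hfst : #{g : SL2 K × SL2 K | g.1 1 0 = 0} ≤ Fintype.card K ^ 2 * Fintype.card (SL2 K) := by
    rw [← Finset.univ_product_univ, Finset.filter_product_left (fun x : SL2 K => x 1 0 = 0),
      Finset.card_product, Finset.card_univ]
    gcongr
    exact card_lowerLeft_eq_zero_le
  have hsnd : #{g : SL2 K × SL2 K | g.2 1 0 = 0} = #{g : SL2 K × SL2 K | g.1 1 0 = 0} :=
    Finset.card_equiv (Equiv.prodComm _ _) (by simp)
  rw [Finset.filter_or, two_mul]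
  exact (Finset.card_union_le _ _).trans (add_le_add hfst (hsnd.trans_le hfst))

theorem card_mul_card_lowerLeft_eq_zero_or_le :
    Fintype.card K * #{g : SL2 K × SL2 K | g.1 1 0 = 0 ∨ g.2 1 0 = 0} ≤
      4 * Fintype.card (SL2 K × SL2 K) := by
  have hcube : Fintype.card K ^ 3 ≤ 2 * Fintype.card (SL2 K) := by
    nlinarith [card_cube_le_card_sl2_add (K := K), Fintype.one_lt_card (α := K)]
  calc Fintype.card K * #{g : SL2 K × SL2 K | g.1 1 0 = 0 ∨ g.2 1 0 = 0}
      ≤ Fintype.card K * (2 * (Fintype.card K ^ 2 * Fintype.card (SL2 K))) :=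
        Nat.mul_le_mul_left _ card_lowerLeft_eq_zero_or_le
    _ = 2 * (Fintype.card K ^ 3 * Fintype.card (SL2 K)) := by ring
    _ ≤ 2 * (2 * Fintype.card (SL2 K) * Fintype.card (SL2 K)) := by gcongr
    _ = 4 * Fintype.card (SL2 K × SL2 K) := by rw [Fintype.card_prod]; ring

end TraceClasses

section WordFibers

open scoped Finset

variable {K : Type} [Field K]

theorem exists_quadratic_form_eq_one [Finite K] {u v w : K} (hdisc : v ^ 2 - 4 * u * w ≠ 0) :
    ∃ x y : K, u * x ^ 2 + v * x * y + w * y ^ 2 = 1 := by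
  cases nonempty_fintype K
  obtain rfl | hu := eq_or_ne u 0
  · have hv : v ≠ 0 := by rintro rfl; simp at hdisc
    exact ⟨(1 - w) / v, 1, by field_simp; ring⟩
  by_cases hchar : ringChar K = 2
  · obtain ⟨x, hx⟩ := FiniteField.isSquare_of_char_two hchar u⁻¹
    exact ⟨x, 0, by rw [sq, ← hx]; simp [hu]⟩
  · have h2 : (2 : K) ≠ 0 := Ring.two_ne_zero hchar
    obtain ⟨s, y, hs⟩ := FiniteField.exists_root_sum_quadratic
      (f := X ^ 2 - C (4 * u)) (g := C (-(v ^ 2 - 4 * u * w)) * X ^ 2)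
      (degree_X_pow_sub_C two_pos _) (degree_C_mul_X_pow 2 (neg_ne_zero.2 hdisc))
      (FiniteField.odd_card_of_char_ne_two hchar)
    simp only [eval_sub, eval_pow, eval_X, eval_C, eval_mul] at hs
    refine ⟨(s - v * y) / (2 * u), y, mul_left_cancel₀ (mul_ne_zero (mul_ne_zero h2 h2) hu) ?_⟩
    field_simp
    linear_combination hs

/-- The companion matrix of `X ^ 2 - c X + 1`, a representative of the conjugacy class of trace
`c` in `SL(2, K)`. -/
def companionSL2 (c : K) : SL2 K := ⟨!![0, -1; 1, c], by simp⟩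

-- The columns of `P` are a vector `ξ` and `y ξ`, so `det P` is a binary quadratic form in `ξ`,
-- of discriminant `(tr y) ^ 2 - 4`.
theorem exists_mul_eq_mul_companionSL2 [Finite K] {c : K} (hc : c ^ 2 ≠ 4) {y : SL2 K}
    (hy : trace y.1 = c) : ∃ P : SL2 K, y * P = P * companionSL2 c := by
  have hdet := sl2_det y
  have htr : y 1 1 = c - y 0 0 := lowerRight_of_trace_eq hy
  obtain ⟨α, β, h⟩ := exists_quadratic_form_eq_one (u := y 1 0) (v := y 1 1 - y 0 0) (w := -y 0 1)
    (by
      rw [htr] at hdet ⊢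
      exact fun h => hc (by linear_combination h + 4 * hdet))
  obtain ⟨P, hP⟩ : ∃ P : SL2 K, (P : Matrix (Fin 2) (Fin 2) K) =
      !![α, y 0 0 * α + y 0 1 * β; β, y 1 0 * α + y 1 1 * β] :=
    ⟨⟨_, by rw [det_fin_two_of]; linear_combination h⟩, rfl⟩
  have hC : (companionSL2 c : Matrix (Fin 2) (Fin 2) K) = !![0, -1; 1, c] := rfl
  refine ⟨P, ?_⟩
  ext i j
  rw [Matrix.SpecialLinearGroup.coe_mul, Matrix.SpecialLinearGroup.coe_mul, hP, hC]
  fin_cases i <;> fin_cases j <;> simp [Matrix.mul_apply, Fin.sum_univ_two]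
  · linear_combination (y 0 0 * α + y 0 1 * β) * htr - α * hdet
  · linear_combination (y 1 0 * α + y 1 1 * β) * htr - β * hdet

theorem isConj_of_trace_eq [Finite K] {y z : SL2 K} (hy : trace y.1 ^ 2 ≠ 4)
    (hyz : trace z.1 = trace y.1) : IsConj y z := by
  obtain ⟨P, hP⟩ := exists_mul_eq_mul_companionSL2 hy rfl
  obtain ⟨Q, hQ⟩ := exists_mul_eq_mul_companionSL2 hy hyz
  refine isConj_iff.2 ⟨Q * P⁻¹, ?_⟩
  rw [eq_mul_inv_of_mul_eq hP, eq_mul_inv_of_mul_eq hQ]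
  simp [mul_assoc]

variable [Fintype K] [DecidableEq K]

theorem card_wordMap_eq_of_isConj (w : FreeGroup (Fin 2)) {y z : SL2 K} (h : IsConj y z) :
    #{g | wordMap w K g = y} = #{g | wordMap w K g = z} := by
  obtain ⟨P, rfl⟩ := isConj_iff.1 h
  refine Finset.card_equiv ((MulAut.conj P).toEquiv.prodCongr (MulAut.conj P).toEquiv) fun g => ?_
  have hconj := map_wordEval (MulAut.conj P).toMonoidHom w g.1 g.2
  rw [Finset.mem_filter_univ, Finset.mem_filter_univ]
  exact ⟨fun hg => hconj.symm.trans (congrArg (MulAut.conj P) hg),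
    fun hg => (MulAut.conj P).injective (hconj.trans hg)⟩

theorem card_wordTrace_eq_mul (w : FreeGroup (Fin 2)) {y : SL2 K} (hy : trace y.1 ^ 2 ≠ 4) :
    #{g | wordTrace w K g = trace y.1} =
      #{z : SL2 K | trace z.1 = trace y.1} * #{g | wordMap w K g = y} := by
  rw [Finset.card_eq_sum_card_fiberwise (f := wordMap w K)
    (t := {z : SL2 K | trace z.1 = trace y.1}) fun g hg => by
      rw [Finset.mem_coe, Finset.mem_filter_univ] at hg ⊢
      exact hg]
  refine Finset.sum_const_nat fun z hz => ?_
  have hz : trace z.1 = trace y.1 := by simpa using hz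
  rw [card_wordMap_eq_of_isConj w (isConj_of_trace_eq hy hz), Finset.filter_filter]
  refine congrArg _ (Finset.filter_congr fun g _ => and_iff_right_of_imp ?_)
  rintro rfl
  exact hz

end WordFibers

section SecondMoment

open scoped Finset

theorem card_eval_eq_le {K : Type*} [Field K] [Fintype K] [DecidableEq K] {F : K[X]}
    (hF : F.natDegree ≠ 0) (c : K) : #{τ | F.eval τ = c} ≤ F.natDegree := by
  have hdeg : 0 < F.degree := natDegree_pos_iff_degree_pos.1 (Nat.pos_of_ne_zero hF)
  refine (Finset.card_le_card fun τ hτ => ?_).trans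
    ((Multiset.toFinset_card_le (F - C c).roots).trans (card_roots_sub_C' hdeg))
  simpa [mem_roots_sub_C hdeg] using hτ

variable {K : Type} [Field K] [Fintype K] [DecidableEq K] {w : FreeGroup (Fin 2)} {d e : ℕ}

theorem card_mul_card_wordTrace_eq_le (he : e ≠ 0) (hwe : HasTraceFamily w e) (c : K) :
    Fintype.card K * #{g | wordTrace w K g = c} ≤ (e + 4) * Fintype.card (SL2 K × SL2 K) := by
  obtain ⟨Ψ, hΨ⟩ := hwe K
  refine (card_mul_card_fiber_le (e := e) (wordTrace w K) Ψ
    {g | g.1 1 0 = 0 ∨ g.2 1 0 = 0} c fun g hg => ?_).trans ?_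
  · rw [Finset.mem_filter_univ, not_or] at hg
    obtain ⟨F, rfl, hF⟩ := hΨ g hg.1 hg.2
    simpa only [hF] using card_eval_eq_le he c
  · linarith [card_mul_card_lowerLeft_eq_zero_or_le (K := K)]

theorem card_sq_mul_sum_card_wordTrace_sq_le (he : e ≠ 0) (hwd : HasTraceFamily w d)
    (hwe : HasTraceFamily w e) {A : ℕ} (hA : ∀ F G : K[X], F.natDegree = d → G.natDegree = e →
      #{P : K × K | F.eval P.1 = G.eval P.2} ≤ A) :
    Fintype.card K ^ 2 * ∑ c : K, #{g | wordTrace w K g = c} ^ 2 ≤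
      Fintype.card (SL2 K × SL2 K) ^ 2 * (A + 8 * e + 32) := by
  obtain ⟨Φ, hΦ⟩ := hwd K
  obtain ⟨Ψ, hΨ⟩ := hwe K
  set E : Finset (SL2 K × SL2 K) := {g | g.1 1 0 = 0 ∨ g.2 1 0 = 0} with hE
  set N := Fintype.card (SL2 K × SL2 K)
  have hE_card : Fintype.card K * #E ≤ 4 * N := card_mul_card_lowerLeft_eq_zero_or_le
  calc Fintype.card K ^ 2 * ∑ c : K, #{g | wordTrace w K g = c} ^ 2
      ≤ N ^ 2 * A + 2 * #E * (Fintype.card K * ((e + 4) * N)) := by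
        refine card_sq_mul_sum_card_fiber_sq_le (wordTrace w K) Φ Ψ E
          (card_mul_card_wordTrace_eq_le he hwe) fun g hg g' hg' => ?_
        rw [hE, Finset.mem_filter_univ, not_or] at hg hg'
        obtain ⟨F, hFd, hF⟩ := hΦ g hg.1 hg.2
        obtain ⟨G, hGe, hG⟩ := hΨ g' hg'.1 hg'.2
        simpa only [hF, hG] using hA F G hFd hGe
    _ = N ^ 2 * A + 2 * (Fintype.card K * #E) * ((e + 4) * N) := by ring
    _ ≤ N ^ 2 * A + 2 * (4 * N) * ((e + 4) * N) := by
        gcongr _ + 2 * ?_ * _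
    _ = N ^ 2 * (A + 8 * e + 32) := by ring

theorem card_mul_sum_card_wordTrace_sq_le (hd : d ≠ 0) (he : e ≠ 0) (hde : d.Coprime e)
    (hwd : HasTraceFamily w d) (hwe : HasTraceFamily w e) {p n μ : ℕ} [Fact p.Prime] [CharP K p]
    (hq : Fintype.card K = p ^ n) (hμ : 2 * μ ≤ n) (hlt : d * e + p ^ μ + 1 < p ^ (n - μ)) :
    (Fintype.card K : ℝ) * ∑ c : K, (#{g | wordTrace w K g = c} : ℝ) ^ 2 ≤
      (Fintype.card (SL2 K × SL2 K) : ℝ) ^ 2 * (1 + (4 * d * e + 8 * e + 36) / p ^ μ) := by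
  have hp : p.Prime := Fact.out
  set N := Fintype.card (SL2 K × SL2 K)
  set S := ∑ c : K, #{g | wordTrace w K g = c} ^ 2 with hS
  have hS_le : Fintype.card K ^ 2 * S ≤
      N ^ 2 * (p ^ n + p ^ (n - μ) * (4 * d * e + 8 * e + 36)) := by
    have hone : 1 ≤ p ^ (n - μ) := Nat.one_le_pow _ _ hp.pos
    have hle : p ^ μ ≤ p ^ (n - μ) := Nat.pow_le_pow_right hp.pos (by omega)
    refine (card_sq_mul_sum_card_wordTrace_sq_le he hwd hwe fun F G hF hG => ?_).trans
      (Nat.mul_le_mul_left _ ?_ : N ^ 2 * (p ^ n + p ^ (n - μ) * (2 * (d * e) + 1) + p ^ μ +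
        2 * (d * e) + 2 + 8 * e + 32) ≤ _)
    · rw [← Fintype.card_subtype, ← Nat.card_eq_fintype_card]
      subst hF hG
      exact card_separatedCurve_le hd he hde (Nat.card_eq_fintype_card.trans hq) (by omega) hlt
    · nlinarith [hle, Nat.zero_le (d * e)]
  have hq_pos : (0 : ℝ) < Fintype.card K := by exact_mod_cast Fintype.card_pos
  have hp_pos : (0 : ℝ) < p := by exact_mod_cast hp.pos
  have hsplit : (p : ℝ) ^ (n - μ) = Fintype.card K / p ^ μ := by
    rw [eq_div_iff (by positivity), hq, ← pow_add, Nat.sub_add_cancel (by omega), Nat.cast_pow]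
  have hS_le_real : (Fintype.card K : ℝ) ^ 2 * S ≤
      N ^ 2 * (Fintype.card K + Fintype.card K / p ^ μ * (4 * d * e + 8 * e + 36)) := by
    rw [← hsplit, hq]
    exact_mod_cast hq ▸ hS_le
  refine le_of_mul_le_mul_left ?_ hq_pos
  calc (Fintype.card K : ℝ) * (Fintype.card K * ∑ c : K, (#{g | wordTrace w K g = c} : ℝ) ^ 2)
      = (Fintype.card K : ℝ) ^ 2 * S := by rw [hS]; push_cast; ring
    _ ≤ _ := hS_le_real
    _ = _ := by ring

end SecondMoment

section Equidistribution

open scoped Finset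

theorem sq_mul_card_far_from_mean_le {ι : Type*} [Fintype ι] (f : ι → ℝ) {κ η : ℝ}
    (hη : 0 ≤ η) (hsum : 0 < ∑ i, f i)
    (hsq : Fintype.card ι * ∑ i, f i ^ 2 ≤ (∑ i, f i) ^ 2 * (1 + κ)) :
    η ^ 2 * #{i | η * ((∑ j, f j) / Fintype.card ι) ≤ |f i - (∑ j, f j) / Fintype.card ι|} ≤
      κ * Fintype.card ι := by
  have hι : Nonempty ι := by
    by_contra h
    rw [not_nonempty_iff] at h
    simp at hsum
  have hq : (0 : ℝ) < Fintype.card ι := by exact_mod_cast Fintype.card_pos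
  set q := (Fintype.card ι : ℝ)
  set S := ∑ i, f i with hS
  have hvar : ∑ i, (f i - S / q) ^ 2 ≤ κ * q * (S / q) ^ 2 := by
    have hexpand : ∑ i, (f i - S / q) ^ 2 = ∑ i, f i ^ 2 - S ^ 2 / q := by
      simp_rw [sub_sq, Finset.sum_add_distrib, Finset.sum_sub_distrib, ← Finset.sum_mul,
        ← Finset.mul_sum, ← hS, Finset.sum_const, Finset.card_univ, nsmul_eq_mul]
      field_simp
      ring
    rw [hexpand, sub_le_iff_le_add]
    refine le_of_mul_le_mul_left (hsq.trans_eq ?_) hq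
    field_simp
    ring
  refine le_of_mul_le_mul_right (le_trans ?_ hvar) (by positivity : 0 < (S / q) ^ 2)
  calc η ^ 2 * #{i | η * (S / q) ≤ |f i - S / q|} * (S / q) ^ 2
      = ∑ i with η * (S / q) ≤ |f i - S / q|, (η * (S / q)) ^ 2 := by
        rw [Finset.sum_const, nsmul_eq_mul]
        ring
    _ ≤ ∑ i with η * (S / q) ≤ |f i - S / q|, (f i - S / q) ^ 2 := by
        refine Finset.sum_le_sum fun i hi => ?_
        rw [← sq_abs (f i - S / q)]
        gcongr
        exact (Finset.mem_filter.1 hi).2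
    _ ≤ ∑ i, (f i - S / q) ^ 2 :=
        Finset.sum_le_sum_of_subset_of_nonneg (Finset.filter_subset _ _) fun _ _ _ => sq_nonneg _

theorem abs_sub_lt_of_abs_mul_sub_lt {q G T f δ : ℝ} (hδ : 0 < δ) (hδ₁ : δ ≤ 1) (hq : 16 ≤ δ * q)
    (hG : |G - q ^ 3| ≤ q ^ 2) (hT : |T - q ^ 2| ≤ q)
    (hf : |T * f - G ^ 2 / q| < δ / 2 * (G ^ 2 / q)) : |f - G| < δ * G := by
  rw [abs_le] at hG hT
  rw [abs_lt] at hf ⊢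
  have hq₁ : 16 ≤ q := by nlinarith
  have hT₀ : 0 < T := by nlinarith
  have hG₀ : 0 < G := by nlinarith [sq_nonneg q]
  have hle : G ^ 2 / q ≤ G * (q * (q + 1)) := by
    rw [div_le_iff₀ (by linarith)]
    nlinarith
  have hge : G * (q * (q - 1)) ≤ G ^ 2 / q := by
    rw [le_div_iff₀ (by linarith)]
    nlinarith
  have hTge : q * (q - 1) ≤ T := by linarith
  have hTle : T ≤ q * (q + 1) := by linarith
  constructor
  · have hlt : T * ((1 - δ) * G) < T * f := by
      calc T * ((1 - δ) * G) ≤ q * (q + 1) * ((1 - δ) * G) := by gcongr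
        _ = G * q * ((1 - δ) * (q + 1)) := by ring
        _ < G * q * ((1 - δ / 2) * (q - 1)) := by gcongr G * q * ?_; linarith
        _ = (1 - δ / 2) * (G * (q * (q - 1))) := by ring
        _ ≤ (1 - δ / 2) * (G ^ 2 / q) := by gcongr; linarith
        _ < T * f := by linarith
    linarith [lt_of_mul_lt_mul_left hlt hT₀.le]
  · have hlt : T * f < T * ((1 + δ) * G) := by
      calc T * f < (1 + δ / 2) * (G ^ 2 / q) := by linarith
        _ ≤ (1 + δ / 2) * (G * (q * (q + 1))) := by gcongr
        _ = G * q * ((1 + δ / 2) * (q + 1)) := by ring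
        _ < G * q * ((1 + δ) * (q - 1)) := by gcongr G * q * ?_; linarith
        _ = q * (q - 1) * ((1 + δ) * G) := by ring
        _ ≤ T * ((1 + δ) * G) := by gcongr
    linarith [lt_of_mul_lt_mul_left hlt hT₀.le]

theorem isEquidistributed_of_card_lt {X Y : Type*} [Fintype X] [Fintype Y] [DecidableEq Y]
    {f : X → Y} {ε : ℝ} (B : Finset Y) (hB : #B < ε * Fintype.card Y)
    (hf : ∀ y ∉ B, |(#{x | f x = y} : ℝ) - Fintype.card X / Fintype.card Y| <
      ε * Fintype.card X / Fintype.card Y) : IsEquidistributed f ε := by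
  refine ⟨(Bᶜ : Finset Y), ?_, fun y hy => ?_⟩
  · rw [Nat.card_coe_set_eq, Set.ncard_coe_finset, Nat.card_eq_fintype_card, Finset.card_compl,
      Nat.cast_sub (Finset.card_le_univ B)]
    linarith
  · rw [Nat.card_eq_fintype_card, Nat.card_eq_fintype_card, Nat.card_eq_fintype_card,
      Fintype.card_subtype]
    exact hf y (by simpa using hy)

variable {K : Type} [Field K] [Fintype K] [DecidableEq K]

theorem abs_card_sl2_sub_le :
    |(Fintype.card (SL2 K) : ℝ) - (Fintype.card K : ℝ) ^ 3| ≤ (Fintype.card K : ℝ) ^ 2 := by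
  rw [abs_sub_le_iff, sub_le_iff_le_add, sub_le_iff_le_add]
  exact ⟨by exact_mod_cast card_sl2_le.trans_eq (add_comm _ _),
    by exact_mod_cast card_cube_le_card_sl2_add.trans_eq (add_comm _ _)⟩

theorem abs_card_trace_eq_sub_le (c : K) :
    |(#{y : SL2 K | trace y.1 = c} : ℝ) - (Fintype.card K : ℝ) ^ 2| ≤ Fintype.card K := by
  rw [abs_sub_le_iff, sub_le_iff_le_add, sub_le_iff_le_add]
  exact ⟨by exact_mod_cast (card_trace_eq_le c).trans_eq (add_comm _ _),
    by exact_mod_cast (sq_card_le_card_trace_eq_add c).trans_eq (add_comm _ _)⟩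

theorem sum_card_wordTrace_eq (w : FreeGroup (Fin 2)) :
    ∑ c : K, (#{g | wordTrace w K g = c} : ℝ) = (Fintype.card (SL2 K) : ℝ) ^ 2 := by
  have h := Finset.card_eq_sum_card_fiberwise (f := wordTrace w K) (s := Finset.univ)
    (t := Finset.univ) (by simp)
  rw [Finset.card_univ, Fintype.card_prod, ← sq] at h
  exact_mod_cast h.symm

/-- The traces at which the fiber of `wordTrace w K` deviates from the mean by a factor of at least
`η`, together with the traces `± 2` that do not determine a conjugacy class of `SL(2, K)`. -/
noncomputable def exceptionalTraces (w : FreeGroup (Fin 2)) (K : Type) [Field K] [Fintype K]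
    [DecidableEq K] (η : ℝ) : Finset K :=
  (Finset.univ.filter fun c => η * ((Fintype.card (SL2 K) : ℝ) ^ 2 / Fintype.card K) ≤
    |(#{g | wordTrace w K g = c} : ℝ) - (Fintype.card (SL2 K) : ℝ) ^ 2 / Fintype.card K|) ∪ {2, -2}

theorem sq_mul_card_exceptionalTraces_le (w : FreeGroup (Fin 2)) {κ η : ℝ} (hη : 0 ≤ η)
    (hS : (Fintype.card K : ℝ) * ∑ c : K, (#{g | wordTrace w K g = c} : ℝ) ^ 2 ≤
      (Fintype.card (SL2 K × SL2 K) : ℝ) ^ 2 * (1 + κ)) :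
    η ^ 2 * #(exceptionalTraces w K η) ≤ κ * Fintype.card K + 2 * η ^ 2 := by
  have hcard : (Fintype.card (SL2 K × SL2 K) : ℝ) = (Fintype.card (SL2 K) : ℝ) ^ 2 := by
    rw [Fintype.card_prod, Nat.cast_mul, sq]
  have hfar := sq_mul_card_far_from_mean_le (fun c : K => (#{g | wordTrace w K g = c} : ℝ))
    (κ := κ) hη (by rw [sum_card_wordTrace_eq]; positivity)
    (by rwa [sum_card_wordTrace_eq, ← hcard])
  rw [sum_card_wordTrace_eq] at hfar
  refine le_trans ?_ (add_le_add_left hfar (2 * η ^ 2))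
  rw [mul_comm 2, ← mul_add]
  gcongr
  rw [exceptionalTraces]
  refine (Nat.cast_le.2 (Finset.card_union_le _ _)).trans ?_
  rw [Nat.cast_add]
  gcongr
  exact_mod_cast Finset.card_le_two

theorem abs_card_wordMap_sub_lt (w : FreeGroup (Fin 2)) {δ : ℝ} (hδ : 0 < δ) (hδ₁ : δ ≤ 1)
    (hq : 16 ≤ δ * Fintype.card K) {y : SL2 K} (hy : trace y.1 ∉ exceptionalTraces w K (δ / 2)) :
    |(#{g | wordMap w K g = y} : ℝ) - Fintype.card (SL2 K)| < δ * Fintype.card (SL2 K) := by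
  simp only [exceptionalTraces, Finset.mem_union, Finset.mem_filter_univ, Finset.mem_insert,
    Finset.mem_singleton, not_or, not_le] at hy
  obtain ⟨hnear, hne, hne'⟩ := hy
  have hsq : trace y.1 ^ 2 ≠ 4 := by
    rw [show (4 : K) = 2 ^ 2 by norm_num, Ne, sq_eq_sq_iff_eq_or_eq_neg]
    tauto
  refine abs_sub_lt_of_abs_mul_sub_lt hδ hδ₁ hq abs_card_sl2_sub_le
    (abs_card_trace_eq_sub_le (trace y.1)) ?_
  rwa [card_wordTrace_eq_mul w hsq, Nat.cast_mul] at hnear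

theorem isEquidistributed_wordMap {w : FreeGroup (Fin 2)} {κ δ : ℝ} (hδ : 0 < δ) (hδ₁ : δ ≤ 1)
    (hκ : 32 * κ ≤ δ ^ 3) (hq : 16 ≤ δ * Fintype.card K)
    (hS : (Fintype.card K : ℝ) * ∑ c : K, (#{g | wordTrace w K g = c} : ℝ) ^ 2 ≤
      (Fintype.card (SL2 K × SL2 K) : ℝ) ^ 2 * (1 + κ)) :
    IsEquidistributed (wordMap w K) δ := by
  set D := exceptionalTraces w K (δ / 2)
  set q := (Fintype.card K : ℝ)
  set G := (Fintype.card (SL2 K) : ℝ)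
  have hq₁ : 16 ≤ q := by nlinarith
  have hG : q ^ 3 - q ^ 2 ≤ G := by linarith [(abs_le.1 (abs_card_sl2_sub_le (K := K))).1]
  have hD : (#D : ℝ) ≤ δ * q / 4 := by
    have h := sq_mul_card_exceptionalTraces_le w (half_pos hδ).le hS
    refine le_of_mul_le_mul_left (h.trans ?_) (by positivity : 0 < (δ / 2) ^ 2)
    nlinarith [sq_nonneg δ]
  refine isEquidistributed_of_card_lt {y : SL2 K | trace y.1 ∈ D} ?_ fun y hy => ?_
  · calc (#{y : SL2 K | trace y.1 ∈ D} : ℝ) ≤ #D * (q ^ 2 + q) :=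
          (Nat.cast_le.2 (card_trace_mem_le D)).trans_eq (by push_cast; rfl)
      _ ≤ δ * q / 4 * (q ^ 2 + q) := by gcongr
      _ = δ * (q * (q ^ 2 + q) / 4) := by ring
      _ < δ * (q ^ 3 - q ^ 2) := by gcongr; nlinarith [sq_nonneg q]
      _ ≤ δ * G := by gcongr
  · rw [Finset.mem_filter_univ] at hy
    have hquot : (Fintype.card (SL2 K × SL2 K) : ℝ) / Fintype.card (SL2 K) = G := by
      rw [Fintype.card_prod, Nat.cast_mul, mul_div_cancel_right₀ _ (by positivity)]
    rw [mul_div_assoc, hquot]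
    exact abs_card_wordMap_sub_lt w hδ hδ₁ hq hy

theorem IsEquidistributed.mono {X Y : Type*} {f : X → Y} {δ ε : ℝ} (h : IsEquidistributed f δ)
    (hle : δ ≤ ε) : IsEquidistributed f ε := by
  obtain ⟨Y', hcard, hfib⟩ := h
  exact ⟨Y', hcard.trans_le' (by gcongr), fun y hy => (hfib y hy).trans_le (by gcongr)⟩

open Filter Topology in
theorem exists_tendsto_zero_eventually {P : ℕ → ℝ → Prop} (hP : ∀ n, Monotone (P n))
    (h : ∀ δ > 0, ∀ᶠ n in atTop, P n δ) :
    ∃ ε : ℕ → ℝ, Tendsto ε atTop (𝓝 0) ∧ ∀ᶠ n in atTop, P n (ε n) := by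
  have hbdd (n) : BddBelow {δ | 0 < δ ∧ P n δ} := ⟨0, fun x hx => hx.1.le⟩
  have hnonneg (n) : 0 ≤ sInf {δ | 0 < δ ∧ P n δ} := Real.sInf_nonneg fun x hx => hx.1.le
  refine ⟨fun n => sInf {δ | 0 < δ ∧ P n δ} + 1 / (n + 1), ?_, ?_⟩
  · have hinf : Tendsto (fun n => sInf {δ | 0 < δ ∧ P n δ}) atTop (𝓝 0) := by
      refine tendsto_order.2 ⟨fun a ha => .of_forall fun n => ha.trans_le (hnonneg n),
        fun a ha => ?_⟩
      filter_upwards [h (a / 2) (half_pos ha)] with n hn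
      exact (csInf_le (hbdd n) ⟨half_pos ha, hn⟩).trans_lt (half_lt_self ha)
    simpa using hinf.add tendsto_one_div_add_atTop_nhds_zero_nat
  · filter_upwards [h 1 one_pos] with n hn
    obtain ⟨x, hx, hlt⟩ := exists_lt_of_csInf_lt (s := {δ | 0 < δ ∧ P n δ}) ⟨1, one_pos, hn⟩
      (lt_add_of_pos_right _ (by positivity : (0 : ℝ) < 1 / (n + 1)))
    exact hP n hlt.le hx.2

end Equidistribution

section MainTheorem

open Filter Topology

variable {w : FreeGroup (Fin 2)} {d e p : ℕ}

theorem eventually_isEquidistributed_wordMap (hd : d ≠ 0) (he : e ≠ 0) (hde : d.Coprime e)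
    (hwd : HasTraceFamily w d) (hwe : HasTraceFamily w e) [Fact p.Prime] {δ : ℝ} (hδ : 0 < δ)
    (hδ₁ : δ ≤ 1) : ∀ᶠ n : ℕ in atTop, IsEquidistributed (wordMap w (GaloisField p n)) δ := by
  have hp : p.Prime := Fact.out
  have htends : Tendsto (fun n : ℕ => p ^ (n / 3)) atTop atTop :=
    (tendsto_pow_atTop_atTop_of_one_lt hp.one_lt).comp (Nat.tendsto_div_const_atTop three_ne_zero)
  have htends_real := tendsto_natCast_atTop_atTop (R := ℝ) |>.comp htends
  filter_upwards [htends.eventually_ge_atTop (d * e + 3), htends_real.eventually_ge_atTop (16 / δ),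
    htends_real.eventually_ge_atTop (32 * (4 * d * e + 8 * e + 36) / δ ^ 3),
    eventually_ne_atTop 0] with n hlarge hδ_le hκ_le hn
  rw [Function.comp_apply, div_le_iff₀' (by positivity)] at hδ_le hκ_le
  let _ : Fintype (GaloisField p n) := Fintype.ofFinite _
  classical
  have hcard : Fintype.card (GaloisField p n) = p ^ n :=
    Fintype.card_eq_nat_card.trans (GaloisField.card p n hn)
  have hlt : d * e + p ^ (n / 3) + 1 < p ^ (n - n / 3) := by
    have hsq : p ^ (n / 3) * p ^ (n / 3) ≤ p ^ (n - n / 3) := by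
      rw [← pow_add]
      exact Nat.pow_le_pow_right hp.pos (by omega)
    nlinarith
  refine isEquidistributed_wordMap hδ hδ₁ ?_ ?_
    (card_mul_sum_card_wordTrace_sq_le hd he hde hwd hwe hcard (by omega) hlt)
  · rw [← mul_div_assoc, div_le_iff₀ (by exact_mod_cast Nat.pow_pos hp.pos)]
    exact_mod_cast hκ_le
  · rw [hcard]
    refine hδ_le.trans ?_
    gcongr
    exacts [hp.one_le, Nat.div_le_self n 3]

theorem isPEquidistributed_of_coprime (hd : d ≠ 0) (he : e ≠ 0) (hde : d.Coprime e)
    (hwd : HasTraceFamily w d) (hwe : HasTraceFamily w e) (hp : p.Prime) :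
    IsPEquidistributed w p hp := by
  have : Fact p.Prime := ⟨hp⟩
  obtain ⟨ε, hε, hequi⟩ := exists_tendsto_zero_eventually
    (P := fun n δ => IsEquidistributed (wordMap w (GaloisField p n)) δ)
    (fun n _ _ hle h => h.mono hle) fun δ hδ => by
      filter_upwards [eventually_isEquidistributed_wordMap (p := p) hd he hde hwd hwe
        (lt_min hδ one_pos) (min_le_right δ 1)] with n hn
      exact hn.mono (min_le_left δ 1)
  exact ⟨fun m => ε (Nat.log p m), by simpa only [Nat.log_pow hp.one_lt] using hε,
    by simpa only [Nat.log_pow hp.one_lt] using hequi⟩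

end MainTheorem

theorem power_word_of_not_p_equidistributed_general {r : ℕ} (hr : r.Prime)
    (a b : Fin r → ℤ) (hab : ∀ i, a i ≠ 0 ∧ b i ≠ 0) (p : ℕ) (hp : p.Prime)
    (hne : ¬ IsPEquidistributed (wordOf a b) p hp) :
    ∃ α β : ℤ, α ≠ 0 ∧ β ≠ 0 ∧
      wordOf a b = (FreeGroup.of (0 : Fin 2) ^ α * FreeGroup.of (1 : Fin 2) ^ β) ^ r := by
  obtain ⟨n, rfl⟩ := Nat.exists_eq_succ_of_ne_zero hr.ne_zero
  by_cases hconst : (∀ i, a i = a 0) ∧ ∀ i, b i = b 0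
  · refine ⟨a 0, b 0, (hab 0).1, (hab 0).2, ?_⟩
    rw [← wordOf_const, funext hconst.1, funext hconst.2]
  · obtain ⟨d, e, hd, he, hde, hwd, hwe⟩ := exists_coprime_hasTraceFamily hr (fun i => (hab i).1)
      (fun i => (hab i).2) hconst
    exact absurd (isPEquidistributed_of_coprime hd he hde hwd hwe hp) hne

theorem power_word_of_not_p_equidistributed {r : ℕ} (hr : r.Prime)
    (a b : Fin r → ℤ) (hab : ∀ i, a i ≠ 0 ∧ b i ≠ 0)
    (p : ℕ) (hp : p.Prime) (hpr : r < p)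
    (hne : ¬ IsPEquidistributed (wordOf a b) p hp) :
    ∃ α β : ℤ, α ≠ 0 ∧ β ≠ 0 ∧
      wordOf a b = (FreeGroup.of (0 : Fin 2) ^ α * FreeGroup.of (1 : Fin 2) ^ β) ^ r :=
  power_word_of_not_p_equidistributed_general hr a b hab p hp hne
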